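/- Let n ≥ 1, 1 ≤ p₀ ≤ p₁ < ∞, 0 < s₀ ≤ s₁ < ∞, q ∈ [1,∞), and set σ = s₁ − s₀ + n(1/p₀ − 1/p₁). Assume 0 < σ < 2, 0 ≤ k₀ < 1, and set k₁ = k₀ + σ/2 − 1. Then there is a constant C > 0 such that: for every T ∈ (0,1] and every map u : (0,T) × ℝⁿ → ℝ which is continuous in t and Schwartz class in x for each t, if N := sup_{0<t<T} t^{k₀} ‖u(t)‖_{B^{s₀}_{p₀,q}} < ∞, then for every t ∈ (0,T), t^{k₁} ‖ ∫₀ᵗ e^{(t−s)Δ} u(s) ds ‖_{B^{s₁}_{p₁,q}} ≤ C N. -/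

import Mathlib

open MeasureTheory Real Filter
open scoped ENNReal FourierTransform

noncomputable section

/-- `ℝⁿ` as a Euclidean space. -/
abbrev Rn (n : ℕ) : Type := EuclideanSpace ℝ (Fin n)

variable {n : ℕ}

/-- The Fourier transform of a real-valued Schwartz function, viewed as a ℂ-valued function. -/
def ftC (f : SchwartzMap (Rn n) ℝ) : Rn n → ℂ :=
  𝓕 (fun x => (f x : ℂ))

/-- `ψ₀` is a Littlewood–Paley function: an even, radial Schwartz function whose Fourier
transform is nonnegative, supported in the annulus `{ξ : 1/2 < ‖ξ‖ < 2}`, and satisfies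
`∑_{j ∈ ℤ} ψ̂₀(2^{-j} ξ) = 1` for `ξ ≠ 0`. -/
structure IsLPF (n : ℕ) (ψ₀ : SchwartzMap (Rn n) ℝ) : Prop where
  even : ∀ x : Rn n, ψ₀ (-x) = ψ₀ x
  radial : ∀ x y : Rn n, ‖x‖ = ‖y‖ → ψ₀ x = ψ₀ y
  ft_im : ∀ ξ : Rn n, (ftC ψ₀ ξ).im = 0
  ft_nonneg : ∀ ξ : Rn n, 0 ≤ (ftC ψ₀ ξ).re
  ft_supp : ∀ ξ : Rn n, ftC ψ₀ ξ ≠ 0 → 1/2 < ‖ξ‖ ∧ ‖ξ‖ < 2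
  ft_sum : ∀ ξ : Rn n, ξ ≠ 0 → HasSum (fun j : ℤ => ftC ψ₀ ((2:ℝ) ^ (-j) • ξ)) 1

/-- The Littlewood–Paley kernel `ψ_j(x) = 2^{jn} ψ₀(2^j x)`, whose Fourier transform is
`ψ̂₀(2^{-j} ξ)`. -/
def lpKernel (ψ₀ : SchwartzMap (Rn n) ℝ) (j : ℤ) (x : Rn n) : ℝ :=
  (2:ℝ) ^ (j * (n:ℤ)) * ψ₀ ((2:ℝ) ^ j • x)

/-- The Littlewood–Paley projection `Δ_j f = ψ_j ∗ f`. -/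
def lpProj (ψ₀ : SchwartzMap (Rn n) ℝ) (j : ℤ) (f : Rn n → ℝ) : Rn n → ℝ :=
  MeasureTheory.convolution (lpKernel ψ₀ j) f (ContinuousLinearMap.mul ℝ ℝ) volume

/-- `S_j f = ∑_{m ≤ j} Δ_m f`, the low-frequency cutoff; this is the L² function whose
Fourier transform is `(∑_{m ≤ j} ψ̂₀(2^{-m} ξ)) f̂(ξ)`. -/
def lowProj (ψ₀ : SchwartzMap (Rn n) ℝ) (j : ℤ) (f : Rn n → ℝ) (x : Rn n) : ℝ :=
  ∑' m : ℤ, if m ≤ j then lpProj ψ₀ m f x else 0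

/-- `Ψ` is the low-frequency piece of the Littlewood–Paley decomposition:
`Ψ̂ = 1 − ∑_{k ≥ 0} ψ̂_k`. -/
def IsLowPiece (ψ₀ Ψ : SchwartzMap (Rn n) ℝ) : Prop :=
  ∀ ξ : Rn n, ftC Ψ ξ = 1 - ∑' k : ℕ, ftC ψ₀ ((2:ℝ) ^ (-(k:ℤ)) • ξ)

/-- The inhomogeneous Besov norm `‖f‖_{B^s_{p,q}}`, valued in `[0,∞]`:
`‖Ψ∗f‖_{L^p} + (∑_{j ≥ 0} (2^{js} ‖Δ_j f‖_{L^p})^q)^{1/q}`, with the supremum over `j`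
replacing the `ℓ^q` sum when `q = ∞`. -/
def besovNorm (ψ₀ Ψ : SchwartzMap (Rn n) ℝ) (s : ℝ) (p q : ℝ≥0∞) (f : Rn n → ℝ) : ℝ≥0∞ :=
  eLpNorm (MeasureTheory.convolution (fun x => Ψ x) f (ContinuousLinearMap.mul ℝ ℝ) volume)
      p volume +
    (if q = ∞ then
      ⨆ j : ℕ, ENNReal.ofReal ((2:ℝ) ^ ((j:ℝ) * s)) * eLpNorm (lpProj ψ₀ (j:ℤ) f) p volume
    else
      (∑' j : ℕ, (ENNReal.ofReal ((2:ℝ) ^ ((j:ℝ) * s)) *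
        eLpNorm (lpProj ψ₀ (j:ℤ) f) p volume) ^ q.toReal) ^ (1 / q.toReal))

/-- The heat semigroup `e^{tΔ} f = h_t ∗ f` with `h_t(x) = (4πt)^{-n/2} e^{-‖x‖²/(4t)}`. -/
def heatOp (n : ℕ) (t : ℝ) (f : Rn n → ℝ) : Rn n → ℝ :=
  MeasureTheory.convolution
    (fun x : Rn n => (4 * π * t) ^ (-(n:ℝ)/2) * Real.exp (-‖x‖^2 / (4*t))) f
    (ContinuousLinearMap.mul ℝ ℝ) volume

/-- The partial derivative `∂_{x_i} f`. -/
def pderiv' (i : Fin n) (f : Rn n → ℝ) (x : Rn n) : ℝ :=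
  fderiv ℝ f x (EuclideanSpace.single i 1)

/-- The Laplacian `Δf = ∑ᵢ ∂²_{x_i} f`. -/
def lapl (f : Rn n → ℝ) (x : Rn n) : ℝ :=
  ∑ i : Fin n, pderiv' i (pderiv' i f) x

/-
Each Littlewood-Paley block of `e^{τΔ} f` is again frequency localised at scale `2^j`. Bernstein's
inequality (Young's inequality plus scaling) takes it from `L^{p₀}` to `L^{p₁}` at the cost of
`2^{jn(1/p₀ - 1/p₁)}`, and the heat kernel gains `min(1, (2^{2j} τ)⁻¹) ≤ (2^{2j} τ)^{-σ/2}`. The low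
block is harmless because `s₀ > 0` gives `B^{s₀}_{p₀,q} ⊂ L^{p₀}`. Hence, for `0 < τ ≤ 1`,
`‖e^{τΔ} f‖_{B^{s₁}_{p₁,q}} ≤ C τ^{-σ/2} ‖f‖_{B^{s₀}_{p₀,q}}`. Minkowski's integral inequality moves
the Besov norm inside the time integral, and what remains is the Euler Beta integral
`∫₀ᵗ (t - s)^{-σ/2} s^{-k₀} ds = B(1 - k₀, 1 - σ/2) t^{1 - k₀ - σ/2} = B(1 - k₀, 1 - σ/2) t^{-k₁}`.
-/

section IntegralInequalities

variable {α β G : Type*} [MeasurableSpace α] [MeasurableSpace β] [MeasurableSpace G]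

theorem lintegral_mul_rpow_le_rpow_mul_lintegral {μ : Measure α} {p : ℝ} (hp : 1 ≤ p)
    {w f : α → ℝ≥0∞} (hw : AEMeasurable w μ) (hf : AEMeasurable f μ) :
    (∫⁻ a, w a * f a ∂μ) ^ p ≤ (∫⁻ a, w a ∂μ) ^ (p - 1) * ∫⁻ a, w a * f a ^ p ∂μ := by
  have hp0 : 0 < p := by linarith
  have hpinv : 0 ≤ 1 - p⁻¹ := sub_nonneg.2 (inv_le_one_of_one_le₀ hp)
  have split (a : α) : w a * f a = w a ^ (1 - p⁻¹) * (w a * f a ^ p) ^ p⁻¹ := by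
    rw [ENNReal.mul_rpow_of_nonneg _ _ (by positivity), ENNReal.rpow_rpow_inv hp0.ne', ← mul_assoc,
      ← ENNReal.rpow_add_of_nonneg _ _ hpinv (by positivity), sub_add_cancel, ENNReal.rpow_one]
  calc (∫⁻ a, w a * f a ∂μ) ^ p
      = (∫⁻ a, w a ^ (1 - p⁻¹) * (w a * f a ^ p) ^ p⁻¹ ∂μ) ^ p := by simp only [← split]
    _ ≤ ((∫⁻ a, w a ∂μ) ^ (1 - p⁻¹) * (∫⁻ a, w a * f a ^ p ∂μ) ^ p⁻¹) ^ p := by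
        gcongr
        exact ENNReal.lintegral_mul_norm_pow_le hw (hw.mul (hf.pow_const p)) hpinv (by positivity)
          (by ring)
    _ = (∫⁻ a, w a ∂μ) ^ (p - 1) * ∫⁻ a, w a * f a ^ p ∂μ := by
        rw [ENNReal.mul_rpow_of_nonneg _ _ hp0.le, ENNReal.rpow_inv_rpow hp0.ne',
          ← ENNReal.rpow_mul, sub_mul, one_mul, inv_mul_cancel₀ hp0.ne']

theorem lintegral_lintegral_rpow_le_of_lintegral_rpow_le {μ : Measure α} {ν : Measure β} [SFinite μ]
    [SFinite ν] {p : ℝ} (hp : 1 ≤ p) {f : α → β → ℝ≥0∞} (hf : Measurable (Function.uncurry f))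
    {w : β → ℝ≥0∞} (hw : Measurable w) (hw0 : ∀ y, w y ≠ 0) (hw_top : ∀ᵐ y ∂ν, w y ≠ ∞)
    (hfw : ∀ y, ∫⁻ x, f x y ^ p ∂μ ≤ w y ^ p) :
    ∫⁻ x, (∫⁻ y, f x y ∂ν) ^ p ∂μ ≤ (∫⁻ y, w y ∂ν) ^ p := by
  have hp0 : 0 < p := by linarith
  have hquot : Measurable fun z : α × β => w z.2 * ((w z.2)⁻¹ * f z.1 z.2) ^ p :=
    (hw.comp measurable_snd).mul (((hw.comp measurable_snd).inv.mul hf).pow_const p)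
  have jensen (x : α) : (∫⁻ y, f x y ∂ν) ^ p ≤
      (∫⁻ y, w y ∂ν) ^ (p - 1) * ∫⁻ y, w y * ((w y)⁻¹ * f x y) ^ p ∂ν := by
    have : ∫⁻ y, f x y ∂ν = ∫⁻ y, w y * ((w y)⁻¹ * f x y) ∂ν := by
      refine lintegral_congr_ae ?_
      filter_upwards [hw_top] with y hy
      rw [← mul_assoc, ENNReal.mul_inv_cancel (hw0 y) hy, one_mul]
    rw [this]
    exact lintegral_mul_rpow_le_rpow_mul_lintegral hp hw.aemeasurable
      (hw.inv.mul hf.of_uncurry_left).aemeasurable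
  have section_le : ∀ᵐ y ∂ν, ∫⁻ x, w y * ((w y)⁻¹ * f x y) ^ p ∂μ ≤ w y := by
    filter_upwards [hw_top] with y hy
    have hfy : Measurable fun x => f x y ^ p := hf.of_uncurry_right.pow_const p
    simp only [ENNReal.mul_rpow_of_nonneg _ _ hp0.le]
    rw [lintegral_const_mul _ (by fun_prop), lintegral_const_mul _ hfy]
    refine mul_le_of_le_one_right' ((mul_le_mul_right (hfw y) _).trans_eq ?_)
    rw [← ENNReal.mul_rpow_of_nonneg _ _ hp0.le, ENNReal.inv_mul_cancel (hw0 y) hy,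
      ENNReal.one_rpow]
  calc ∫⁻ x, (∫⁻ y, f x y ∂ν) ^ p ∂μ
      ≤ ∫⁻ x, (∫⁻ y, w y ∂ν) ^ (p - 1) * ∫⁻ y, w y * ((w y)⁻¹ * f x y) ^ p ∂ν ∂μ :=
        lintegral_mono jensen
    _ = (∫⁻ y, w y ∂ν) ^ (p - 1) * ∫⁻ y, ∫⁻ x, w y * ((w y)⁻¹ * f x y) ^ p ∂μ ∂ν := by
        rw [lintegral_const_mul _ hquot.lintegral_prod_right',
          lintegral_lintegral_swap hquot.aemeasurable]
    _ ≤ (∫⁻ y, w y ∂ν) ^ (p - 1) * ∫⁻ y, w y ∂ν :=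
        mul_le_mul_right (lintegral_mono_ae section_le) _
    _ = (∫⁻ y, w y ∂ν) ^ p := by
        nth_rw 2 [← ENNReal.rpow_one (∫⁻ y, w y ∂ν)]
        rw [← ENNReal.rpow_add_of_nonneg _ _ (by linarith) zero_le_one, sub_add_cancel]

theorem measurable_eLpNorm_right {ε : Type*} [ENorm ε] {μ : Measure α} [SFinite μ] {p : ℝ≥0∞}
    (hp0 : p ≠ 0) (hp_top : p ≠ ∞) {f : α → β → ε}
    (hf : Measurable (Function.uncurry fun x y => ‖f x y‖ₑ)) :
    Measurable fun y => eLpNorm (fun x => f x y) p μ := by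
  simp only [eLpNorm_eq_lintegral_rpow_enorm_toReal hp0 hp_top]
  exact (Measurable.lintegral_prod_left' (hf.pow_const _)).pow_const _

/- The weight `y ↦ ‖f(·, y)‖_p` may vanish; adding a positive function of arbitrarily small
integral makes Jensen's inequality applicable. -/
theorem eLpNorm_lintegral_le {μ : Measure α} {ν : Measure β} [SFinite μ] [SigmaFinite ν]
    {p : ℝ≥0∞} (hp : 1 ≤ p) (hp_top : p ≠ ∞) {f : α → β → ℝ≥0∞}
    (hf : Measurable (Function.uncurry f)) :
    eLpNorm (fun x => ∫⁻ y, f x y ∂ν) p μ ≤ ∫⁻ y, eLpNorm (fun x => f x y) p μ ∂ν := by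
  have hp0 : p ≠ 0 := (zero_lt_one.trans_le hp).ne'
  have hpR : 1 ≤ p.toReal := by simpa using ENNReal.toReal_mono hp_top hp
  have hpR0 : 0 < p.toReal := by linarith
  set a : β → ℝ≥0∞ := fun y => eLpNorm (fun x => f x y) p μ
  have ha_eq (y : β) : a y ^ p.toReal = ∫⁻ x, f x y ^ p.toReal ∂μ := by
    simp [a, eLpNorm_eq_lintegral_rpow_enorm_toReal hp0 hp_top, ENNReal.rpow_inv_rpow hpR0.ne']
  have ha : Measurable a := measurable_eLpNorm_right hp0 hp_top (by simpa only [enorm_eq_self])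
  refine ENNReal.le_of_forall_pos_le_add fun ε hε ha_fin => ?_
  obtain ⟨g, hg0, hg, hgε⟩ :=
    exists_pos_lintegral_lt_of_sigmaFinite ν (ENNReal.coe_ne_zero.2 hε.ne')
  have ha_top : ∀ᵐ y ∂ν, a y + g y ≠ ∞ := by
    filter_upwards [ae_lt_top ha ha_fin.ne] with y hy
    exact ENNReal.add_ne_top.2 ⟨hy.ne, ENNReal.coe_ne_top⟩
  have power_le := lintegral_lintegral_rpow_le_of_lintegral_rpow_le (μ := μ) hpR hf
    (ha.add hg.coe_nnreal_ennreal) (fun y => by simp [(hg0 y).ne']) ha_top fun y => by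
      rw [← ha_eq, Pi.add_apply]; gcongr; exact le_self_add
  calc eLpNorm (fun x => ∫⁻ y, f x y ∂ν) p μ ≤ ∫⁻ y, a y + g y ∂ν := by
        rw [eLpNorm_eq_lintegral_rpow_enorm_toReal hp0 hp_top, one_div,
          ENNReal.rpow_inv_le_iff hpR0]
        simpa using power_le
    _ = ∫⁻ y, a y ∂ν + ∫⁻ y, g y ∂ν := lintegral_add_left ha _
    _ ≤ ∫⁻ y, a y ∂ν + ε := by gcongr

section Young

variable [AddCommGroup G] [MeasurableAdd₂ G] [MeasurableNeg G] {μ : Measure G}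
  [μ.IsAddLeftInvariant] {f g : G → ℝ≥0∞}

theorem lintegral_lconvolution [SFinite μ] (hf : Measurable f) (hg : Measurable g) :
    ∫⁻ x, (f ⋆ₗ[μ] g) x ∂μ = (∫⁻ y, f y ∂μ) * ∫⁻ y, g y ∂μ := by
  simp only [lconvolution_def]
  rw [lintegral_lintegral_swap (by fun_prop)]
  simp only [← lintegral_mul_const _ hf]
  refine lintegral_congr fun y => ?_
  rw [lintegral_const_mul _ (by fun_prop), lintegral_add_left_eq_self]

variable [μ.IsNegInvariant]

theorem lintegral_neg_add_left_eq_self (h : G → ℝ≥0∞) (x : G) :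
    ∫⁻ y, h (-y + x) ∂μ = ∫⁻ y, h y ∂μ := by
  simpa only [sub_eq_neg_add] using lintegral_sub_left_eq_self h x

/- Hölder's inequality with the three exponents `1/q`, `1/r - 1/q = 1 - 1/p` and
`1/p - 1/q = 1 - 1/r`. -/
theorem lconvolution_le_rpow_mul {p q r : ℝ} (hp : 1 ≤ p) (hq : 1 ≤ q) (hr : 1 ≤ r)
    (h : r⁻¹ + p⁻¹ = 1 + q⁻¹) (hf : Measurable f) (hg : Measurable g) (x : G) :
    (f ⋆ₗ[μ] g) x ≤ ((fun y => f y ^ r) ⋆ₗ[μ] fun y => g y ^ p) x ^ q⁻¹ *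
      ((∫⁻ y, f y ^ r ∂μ) ^ (1 - p⁻¹) * (∫⁻ y, g y ^ p ∂μ) ^ (1 - r⁻¹)) := by
  have hp' : 0 ≤ 1 - p⁻¹ := sub_nonneg.2 (inv_le_one_of_one_le₀ hp)
  have hr' : 0 ≤ 1 - r⁻¹ := sub_nonneg.2 (inv_le_one_of_one_le₀ hr)
  have hq' : 0 ≤ q⁻¹ := by positivity
  have hfr : Measurable fun y => f y ^ r := hf.pow_const r
  have hgp : Measurable fun y => g (-y + x) ^ p := by fun_prop
  have split (y : G) : f y * g (-y + x) = (f y ^ r * g (-y + x) ^ p) ^ q⁻¹ *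
      ((f y ^ r) ^ (1 - p⁻¹) * (g (-y + x) ^ p) ^ (1 - r⁻¹)) := by
    have hfy : (f y ^ r) ^ q⁻¹ * (f y ^ r) ^ (1 - p⁻¹) = f y := by
      rw [← ENNReal.rpow_add_of_nonneg _ _ hq' hp', show q⁻¹ + (1 - p⁻¹) = r⁻¹ by linarith,
        ENNReal.rpow_rpow_inv (by positivity)]
    have hgy : (g (-y + x) ^ p) ^ q⁻¹ * (g (-y + x) ^ p) ^ (1 - r⁻¹) = g (-y + x) := by
      rw [← ENNReal.rpow_add_of_nonneg _ _ hq' hr', show q⁻¹ + (1 - r⁻¹) = p⁻¹ by linarith,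
        ENNReal.rpow_rpow_inv (by positivity)]
    rw [ENNReal.mul_rpow_of_nonneg _ _ hq', mul_mul_mul_comm, hfy, hgy]
  have holder := ENNReal.lintegral_prod_norm_pow_le (μ := μ) Finset.univ
    (f := ![fun y => f y ^ r * g (-y + x) ^ p, fun y => f y ^ r, fun y => g (-y + x) ^ p])
    (p := ![q⁻¹, 1 - p⁻¹, 1 - r⁻¹]) (fun i _ => by
      fin_cases i
      exacts [(hfr.mul hgp).aemeasurable, hfr.aemeasurable, hgp.aemeasurable])
    (by
      simp only [Fin.sum_univ_three, Matrix.cons_val]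
      linarith)
    (fun i _ => by fin_cases i <;> assumption)
  simp only [Fin.prod_univ_three, mul_assoc] at holder
  simp only [lconvolution_def, split]
  refine holder.trans_eq ?_
  simp [lintegral_neg_add_left_eq_self (fun y => g y ^ p)]

theorem lintegral_lconvolution_rpow_le [SFinite μ] {p q r : ℝ} (hp : 1 ≤ p) (hq : 1 ≤ q)
    (hr : 1 ≤ r) (h : r⁻¹ + p⁻¹ = 1 + q⁻¹) (hf : Measurable f) (hg : Measurable g) :
    (∫⁻ x, (f ⋆ₗ[μ] g) x ^ q ∂μ) ^ q⁻¹ ≤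
      (∫⁻ y, f y ^ r ∂μ) ^ r⁻¹ * (∫⁻ y, g y ^ p ∂μ) ^ p⁻¹ := by
  have hp' : 0 ≤ 1 - p⁻¹ := sub_nonneg.2 (inv_le_one_of_one_le₀ hp)
  have hr' : 0 ≤ 1 - r⁻¹ := sub_nonneg.2 (inv_le_one_of_one_le₀ hr)
  have hq0 : 0 < q := by linarith
  have hq' : 0 ≤ q⁻¹ := by positivity
  set F := ∫⁻ y, f y ^ r ∂μ
  set M := ∫⁻ y, g y ^ p ∂μ
  have pow_le (x : G) : (f ⋆ₗ[μ] g) x ^ q ≤ ((fun y => f y ^ r) ⋆ₗ[μ] fun y => g y ^ p) x *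
      (F ^ (1 - p⁻¹) * M ^ (1 - r⁻¹)) ^ q := by
    refine (ENNReal.rpow_le_rpow (lconvolution_le_rpow_mul hp hq hr h hf hg x) hq0.le).trans_eq ?_
    rw [ENNReal.mul_rpow_of_nonneg _ _ hq0.le, ENNReal.rpow_inv_rpow hq0.ne']
  calc (∫⁻ x, (f ⋆ₗ[μ] g) x ^ q ∂μ) ^ q⁻¹
      ≤ (∫⁻ x, ((fun y => f y ^ r) ⋆ₗ[μ] fun y => g y ^ p) x *
          (F ^ (1 - p⁻¹) * M ^ (1 - r⁻¹)) ^ q ∂μ) ^ q⁻¹ := by gcongr; exact pow_le _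
    _ = (F * M) ^ q⁻¹ * (F ^ (1 - p⁻¹) * M ^ (1 - r⁻¹)) := by
        rw [lintegral_mul_const _ (by fun_prop),
          lintegral_lconvolution (hf.pow_const r) (hg.pow_const p),
          ENNReal.mul_rpow_of_nonneg _ _ hq', ENNReal.rpow_rpow_inv hq0.ne']
    _ = F ^ r⁻¹ * M ^ p⁻¹ := by
        rw [ENNReal.mul_rpow_of_nonneg _ _ hq', mul_mul_mul_comm,
          ← ENNReal.rpow_add_of_nonneg _ _ hq' hp', ← ENNReal.rpow_add_of_nonneg _ _ hq' hr',
          show q⁻¹ + (1 - p⁻¹) = r⁻¹ by linarith, show q⁻¹ + (1 - r⁻¹) = p⁻¹ by linarith]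

theorem eLpNorm_lconvolution_le [SFinite μ] {p q r : ℝ≥0∞} (hp : 1 ≤ p) (hr : 1 ≤ r) (hq : q ≠ ∞)
    (h : r⁻¹ + p⁻¹ = 1 + q⁻¹) (hf : Measurable f) (hg : Measurable g) :
    eLpNorm (f ⋆ₗ[μ] g) q μ ≤ eLpNorm f r μ * eLpNorm g p μ := by
  have hp_inv : p⁻¹ ≤ 1 := ENNReal.inv_le_one.2 hp
  have hr_inv : r⁻¹ ≤ 1 := ENNReal.inv_le_one.2 hr
  have hq1 : 1 ≤ q := by
    rw [← ENNReal.inv_le_one, ← ENNReal.add_le_add_iff_left ENNReal.one_ne_top, ← h]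
    gcongr
  have one_lt : 1 < 1 + q⁻¹ := ENNReal.lt_add_right ENNReal.one_ne_top (ENNReal.inv_ne_zero.2 hq)
  have hp_top : p ≠ ∞ := by
    rintro rfl
    exact one_lt.not_ge (by simpa [← h] using hr_inv)
  have hr_top : r ≠ ∞ := by
    rintro rfl
    exact one_lt.not_ge (by simpa [← h] using hp_inv)
  have hpR : 1 ≤ p.toReal := by simpa using ENNReal.toReal_mono hp_top hp
  have hqR : 1 ≤ q.toReal := by simpa using ENNReal.toReal_mono hq hq1
  have hrR : 1 ≤ r.toReal := by simpa using ENNReal.toReal_mono hr_top hr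
  have hR : r.toReal⁻¹ + p.toReal⁻¹ = 1 + q.toReal⁻¹ := by
    have := congrArg ENNReal.toReal h
    rwa [ENNReal.toReal_add (hr_inv.trans_lt ENNReal.one_lt_top).ne
      (hp_inv.trans_lt ENNReal.one_lt_top).ne, ENNReal.toReal_add ENNReal.one_ne_top
      ((ENNReal.inv_le_one.2 hq1).trans_lt ENNReal.one_lt_top).ne, ENNReal.toReal_inv,
      ENNReal.toReal_inv, ENNReal.toReal_inv, ENNReal.toReal_one] at this
  simp only [eLpNorm_eq_lintegral_rpow_enorm_toReal (zero_lt_one.trans_le hp).ne' hp_top,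
    eLpNorm_eq_lintegral_rpow_enorm_toReal (zero_lt_one.trans_le hq1).ne' hq,
    eLpNorm_eq_lintegral_rpow_enorm_toReal (zero_lt_one.trans_le hr).ne' hr_top, enorm_eq_self,
    one_div]
  exact lintegral_lconvolution_rpow_le hpR hqR hrR hR hf hg

end Young

end IntegralInequalities

theorem lintegral_comp_smul {E : Type*} [NormedAddCommGroup E] [NormedSpace ℝ E]
    [FiniteDimensional ℝ E] [MeasurableSpace E] [BorelSpace E] (μ : Measure E) [μ.IsAddHaarMeasure]
    {l : ℝ} (hl : l ≠ 0) (f : E → ℝ≥0∞) :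
    ∫⁻ x, f (l • x) ∂μ = ENNReal.ofReal |(l ^ Module.finrank ℝ E)⁻¹| * ∫⁻ x, f x ∂μ := by
  calc ∫⁻ x, f (l • x) ∂μ = ∫⁻ x, f x ∂(μ.map (l • ·)) :=
        ((Homeomorph.smulOfNeZero l hl).measurableEmbedding.lintegral_map f).symm
    _ = ENNReal.ofReal |(l ^ Module.finrank ℝ E)⁻¹| * ∫⁻ x, f x ∂μ := by
        rw [Measure.map_addHaar_smul μ hl, lintegral_smul_measure, smul_eq_mul]

/- The substitution `s = t x` reduces the integral to Euler's Beta integral. -/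
theorem setLIntegral_Ioo_rpow_sub_mul_rpow {a k t : ℝ} (ha : a < 1) (hk : k < 1) (ht : 0 < t) :
    ∫⁻ s in Set.Ioo 0 t, ENNReal.ofReal ((t - s) ^ (-a) * s ^ (-k)) =
      ENNReal.ofReal (ProbabilityTheory.beta (1 - k) (1 - a) * t ^ (1 - a - k)) := by
  have hk' : 0 < 1 - k := sub_pos.2 hk
  have ha' : 0 < 1 - a := sub_pos.2 ha
  set B := ProbabilityTheory.beta (1 - k) (1 - a) with hB_def
  have hB : 0 < B := ProbabilityTheory.beta_pos hk' ha'
  have rescale (s : ℝ) : (Set.Ioo 0 t).indicator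
      (fun s => ENNReal.ofReal ((t - s) ^ (-a) * s ^ (-k))) s =
        ENNReal.ofReal (B * t ^ (-a - k)) *
          ProbabilityTheory.betaPDF (1 - k) (1 - a) (t⁻¹ * s) := by
    have iff_unit : 0 < t⁻¹ * s ∧ t⁻¹ * s < 1 ↔ s ∈ Set.Ioo 0 t := by
      rw [inv_mul_lt_one₀ ht, Set.mem_Ioo, mul_pos_iff_of_pos_left (inv_pos.2 ht)]
    rw [ProbabilityTheory.betaPDF_eq, ← hB_def, ← ENNReal.ofReal_mul (by positivity), Set.indicator]
    simp only [iff_unit]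
    split_ifs with hs
    · have hts : 0 < t - s := sub_pos.2 hs.2
      rw [show 1 - t⁻¹ * s = t⁻¹ * (t - s) by field_simp, sub_sub_cancel_left, sub_sub_cancel_left,
        mul_rpow (by positivity) hs.1.le, mul_rpow (by positivity) hts.le, inv_rpow ht.le,
        inv_rpow ht.le, ← rpow_neg ht.le, ← rpow_neg ht.le, neg_neg, neg_neg, sub_eq_add_neg (-a) k,
        rpow_add ht, rpow_neg ht.le a, rpow_neg ht.le k]
      congr 1
      field_simp
    · simp
  rw [← lintegral_indicator measurableSet_Ioo]
  simp only [rescale]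
  rw [lintegral_const_mul' _ _ ENNReal.ofReal_ne_top]
  have dilated := lintegral_comp_smul volume (inv_ne_zero ht.ne')
    (ProbabilityTheory.betaPDF (1 - k) (1 - a))
  simp only [smul_eq_mul] at dilated
  rw [dilated, ProbabilityTheory.lintegral_betaPDF_eq_one hk' ha', mul_one, Module.finrank_self,
    pow_one, inv_inv, abs_of_pos ht, ← ENNReal.ofReal_mul (by positivity), mul_assoc,
    ← rpow_add_one ht.ne']
  ring_nf

section SequenceNorms

variable {ι : Type*} [MeasurableSpace ι] [MeasurableSingletonClass ι] {q : ℝ≥0∞}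

theorem eLpNorm_count_eq_ite (hq : q ≠ 0) (c : ι → ℝ≥0∞) :
    eLpNorm c q Measure.count =
      if q = ∞ then ⨆ i, c i else (∑' i, c i ^ q.toReal) ^ (1 / q.toReal) := by
  split_ifs with hq_top
  · rw [hq_top, eLpNorm_exponent_top, eLpNormEssSup_count]
    simp only [enorm_eq_self]
  · rw [eLpNorm_eq_lintegral_rpow_enorm_toReal hq hq_top, lintegral_count]
    simp only [enorm_eq_self]

theorem eLpNorm_count_nat_le_add (hq : 1 ≤ q) (c : ℕ → ℝ≥0∞) :
    eLpNorm c q Measure.count ≤ c 0 + eLpNorm (fun j => c (j + 1)) q Measure.count := by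
  have hq_ne : q ≠ 0 := (one_pos.trans_le hq).ne'
  rw [eLpNorm_count_eq_ite hq_ne, eLpNorm_count_eq_ite hq_ne]
  split_ifs with hq_top
  · refine iSup_le fun j => ?_
    rcases j with _ | j
    exacts [le_self_add, le_add_left (le_iSup (fun j => c (j + 1)) j)]
  · have hq_real : 1 ≤ q.toReal := by simpa using ENNReal.toReal_mono hq_top hq
    rw [tsum_eq_zero_add' ENNReal.summable]
    refine (ENNReal.rpow_add_le_add_rpow _ _ (by positivity)
      ((div_le_one (by positivity)).2 hq_real)).trans_eq ?_
    rw [one_div, ENNReal.rpow_rpow_inv (by positivity)]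

theorem eLpNorm_count_comp_le_of_injective (hq : q ≠ 0) (c : ι → ℝ≥0∞) {e : ι → ι}
    (he : Function.Injective e) :
    eLpNorm (fun i => c (e i)) q Measure.count ≤ eLpNorm c q Measure.count := by
  rw [eLpNorm_count_eq_ite hq, eLpNorm_count_eq_ite hq]
  split_ifs
  · exact iSup_comp_le c e
  · exact ENNReal.rpow_le_rpow
      (ENNReal.tsum_comp_le_tsum_of_injective he fun i => c i ^ q.toReal) (by positivity)

theorem eLpNorm_count_const_mul (a : ℝ≥0∞) (hq : q ≠ 0) (c : ι → ℝ≥0∞) :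
    eLpNorm (fun i => a * c i) q Measure.count = a * eLpNorm c q Measure.count := by
  rw [eLpNorm_count_eq_ite hq, eLpNorm_count_eq_ite hq]
  split_ifs with hq_top
  · rw [ENNReal.mul_iSup]
  · have hq_real : 0 < q.toReal := ENNReal.toReal_pos hq hq_top
    simp only [ENNReal.mul_rpow_of_nonneg _ _ hq_real.le]
    rw [ENNReal.tsum_mul_left, ENNReal.mul_rpow_of_nonneg _ _ (by positivity), one_div,
      ENNReal.rpow_rpow_inv hq_real.ne']

theorem eLpNorm_count_lintegral_le [Countable ι] {β : Type*} [MeasurableSpace β] {ν : Measure β}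
    [SigmaFinite ν] (hq : 1 ≤ q) {f : ι → β → ℝ≥0∞} (hf : ∀ i, Measurable (f i)) :
    eLpNorm (fun i => ∫⁻ y, f i y ∂ν) q Measure.count ≤
      ∫⁻ y, eLpNorm (fun i => f i y) q Measure.count ∂ν := by
  rcases eq_or_ne q ∞ with rfl | hq_top
  · simp only [eLpNorm_exponent_top, eLpNormEssSup_count, enorm_eq_self]
    exact iSup_lintegral_le f
  · exact eLpNorm_lintegral_le hq hq_top (measurable_from_prod_countable_right hf)

theorem eLpNorm_count_window_le (hq : 1 ≤ q) (c : ℕ → ℝ≥0∞) :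
    eLpNorm (fun j => c j + c (j + 1) + c (j + 2)) q Measure.count ≤
      3 * eLpNorm c q Measure.count := by
  have shift_le (k : ℕ) :
      eLpNorm (fun j => c (j + k)) q Measure.count ≤ eLpNorm c q Measure.count :=
    eLpNorm_count_comp_le_of_injective (one_pos.trans_le hq).ne' c (add_left_injective k)
  have aesm (k : ℕ) : AEStronglyMeasurable (fun j => c (j + k)) Measure.count :=
    (measurable_of_countable _).aestronglyMeasurable
  calc eLpNorm (fun j => c j + c (j + 1) + c (j + 2)) q Measure.count
      ≤ eLpNorm c q Measure.count + eLpNorm (fun j => c (j + 1)) q Measure.count +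
          eLpNorm (fun j => c (j + 2)) q Measure.count :=
        (eLpNorm_add_le ((aesm 0).add (aesm 1)) (aesm 2) hq).trans
          (add_le_add_left (eLpNorm_add_le (aesm 0) (aesm 1) hq) _)
    _ ≤ eLpNorm c q Measure.count + eLpNorm c q Measure.count + eLpNorm c q Measure.count := by
        gcongr
        exacts [shift_le 1, shift_le 2]
    _ = 3 * eLpNorm c q Measure.count := by ring

end SequenceNorms

section ConvolutionIntegral

variable {𝕜 α G : Type*} [RCLike 𝕜] [MeasurableSpace α] [AddCommGroup G] [MeasurableSpace G]
  [MeasurableAdd₂ G] [MeasurableNeg G] {μ : Measure G} {ν : Measure α} [SFinite μ]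

theorem stronglyMeasurable_uncurry_convolution {P H : α → G → 𝕜}
    (hP : StronglyMeasurable (Function.uncurry P)) (hH : StronglyMeasurable (Function.uncurry H)) :
    StronglyMeasurable (Function.uncurry fun a =>
      convolution (P a) (H a) (ContinuousLinearMap.mul 𝕜 𝕜) μ) := by
  have integrand : StronglyMeasurable
      (Function.uncurry fun (z : α × G) (y : G) => P z.1 y * H z.1 (z.2 - y)) :=
    (hP.comp_measurable (g := fun w : (α × G) × G => (w.1.1, w.2)) (by fun_prop)).mul
      (hH.comp_measurable (g := fun w : (α × G) × G => (w.1.1, w.1.2 - w.2)) (by fun_prop))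
  exact integrand.integral_prod_right

variable [μ.IsAddLeftInvariant] [μ.IsNegInvariant] {p r : ℝ≥0∞} {P : G → 𝕜} {H : α → G → 𝕜}

theorem ae_lintegral_lconvolution_lt_top [SigmaFinite ν] (hp : 1 ≤ p) (hp_top : p ≠ ∞)
    {f : G → ℝ≥0∞} {h : α → G → ℝ≥0∞} (hf : Measurable f) (hh : Measurable (Function.uncurry h))
    (hf_fin : ∫⁻ y, f y ∂μ ≠ ∞) (hh_fin : ∫⁻ a, eLpNorm (h a) p μ ∂ν ≠ ∞) :
    ∀ᵐ x ∂μ, ∫⁻ a, (f ⋆ₗ[μ] h a) x ∂ν < ∞ := by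
  have hp0 : p ≠ 0 := (one_pos.trans_le hp).ne'
  have conv_meas : Measurable (Function.uncurry fun x a => (f ⋆ₗ[μ] h a) x) := by
    simp only [lconvolution_def]
    have integrand : Measurable
        (Function.uncurry fun (z : G × α) (y : G) => f y * h z.2 (-y + z.1)) :=
      (hf.comp measurable_snd).mul
        (hh.comp (by fun_prop : Measurable fun w : (G × α) × G => (w.1.2, -w.2 + w.1.1)))
    exact integrand.lintegral_prod_right
  have norm_lt_top : eLpNorm (fun x => ∫⁻ a, (f ⋆ₗ[μ] h a) x ∂ν) p μ < ∞ := by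
    calc eLpNorm (fun x => ∫⁻ a, (f ⋆ₗ[μ] h a) x ∂ν) p μ
        ≤ ∫⁻ a, eLpNorm (f ⋆ₗ[μ] h a) p μ ∂ν := eLpNorm_lintegral_le hp hp_top conv_meas
      _ ≤ ∫⁻ a, eLpNorm f 1 μ * eLpNorm (h a) p μ ∂ν := lintegral_mono fun a =>
          eLpNorm_lconvolution_le hp le_rfl hp_top (by rw [inv_one]) hf hh.of_uncurry_left
      _ = (∫⁻ y, f y ∂μ) * ∫⁻ a, eLpNorm (h a) p μ ∂ν := by
          simp only [eLpNorm_one_eq_lintegral_enorm, enorm_eq_self]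
          rw [lintegral_const_mul' _ _ hf_fin]
      _ < ∞ := ENNReal.mul_lt_top hf_fin.lt_top hh_fin.lt_top
  have rpow_fin := lintegral_rpow_enorm_lt_top_of_eLpNorm_lt_top hp0 hp_top norm_lt_top
  filter_upwards [ae_lt_top (by fun_prop) rpow_fin.ne] with x hx
  simpa [ENNReal.rpow_lt_top_iff_of_pos (ENNReal.toReal_pos hp0 hp_top)] using hx

theorem convolution_integral_ae_eq [SigmaFinite ν] (hp : 1 ≤ p) (hp_top : p ≠ ∞)
    (hP : StronglyMeasurable P) (hP_int : Integrable P μ)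
    (hH : StronglyMeasurable (Function.uncurry H)) (hH_fin : ∫⁻ a, eLpNorm (H a) p μ ∂ν ≠ ∞) :
    convolution P (fun x => ∫ a, H a x ∂ν) (ContinuousLinearMap.mul 𝕜 𝕜) μ =ᵐ[μ]
      fun x => ∫ a, convolution P (H a) (ContinuousLinearMap.mul 𝕜 𝕜) μ x ∂ν := by
  have enorm_fin := ae_lintegral_lconvolution_lt_top (ν := ν) (h := fun a x => ‖H a x‖ₑ) hp hp_top
    hP.enorm hH.enorm hP_int.2.ne (by simpa only [eLpNorm_enorm])
  filter_upwards [enorm_fin] with x hx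
  have product_meas : StronglyMeasurable (Function.uncurry fun a y => P y * H a (x - y)) :=
    (hP.comp_measurable measurable_snd).mul
      (hH.comp_measurable (g := fun w : α × G => (w.1, x - w.2)) (by fun_prop))
  have product_int :
      Integrable (Function.uncurry fun a y => P y * H a (x - y)) (ν.prod μ) := by
    refine ⟨product_meas.aestronglyMeasurable, ?_⟩
    rw [hasFiniteIntegral_def, lintegral_prod _ product_meas.enorm.aemeasurable]
    simpa only [lconvolution_def, Function.uncurry, enorm_mul, sub_eq_neg_add] using hx
  simp only [convolution_def, ContinuousLinearMap.mul_apply', ← integral_const_mul]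
  exact (integral_integral_swap product_int).symm

theorem eLpNorm_convolution_integral_le [SigmaFinite ν] (hp : 1 ≤ p) (hp_top : p ≠ ∞)
    (hP : StronglyMeasurable P) (hP_int : Integrable P μ)
    (hH : StronglyMeasurable (Function.uncurry H)) (hH_fin : ∫⁻ a, eLpNorm (H a) p μ ∂ν ≠ ∞)
    (hr : 1 ≤ r) (hr_top : r ≠ ∞) :
    eLpNorm (convolution P (fun x => ∫ a, H a x ∂ν) (ContinuousLinearMap.mul 𝕜 𝕜) μ) r μ ≤
      ∫⁻ a, eLpNorm (convolution P (H a) (ContinuousLinearMap.mul 𝕜 𝕜) μ) r μ ∂ν := by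
  have conv_meas : Measurable (Function.uncurry fun x a =>
      ‖convolution P (H a) (ContinuousLinearMap.mul 𝕜 𝕜) μ x‖ₑ) :=
    (stronglyMeasurable_uncurry_convolution (μ := μ) (P := fun _ => P)
      (hP.comp_measurable measurable_snd) hH).enorm.comp measurable_swap
  rw [eLpNorm_congr_ae (convolution_integral_ae_eq hp hp_top hP hP_int hH hH_fin)]
  have minkowski := eLpNorm_lintegral_le (μ := μ) (ν := ν) hr hr_top conv_meas
  simp only [eLpNorm_enorm] at minkowski
  exact (eLpNorm_mono_enorm fun x => enorm_integral_le_lintegral_enorm _).trans minkowski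

end ConvolutionIntegral

open Module (finrank)
open scoped NNReal SchwartzMap

local notation:67 f:68 "⋆ₛ" g:67 => SchwartzMap.convolution (ContinuousLinearMap.mul ℂ ℂ) f g

section Schwartz

variable {E : Type*} [NormedAddCommGroup E] [InnerProductSpace ℝ E]

/-- The `L¹`-normalised dilation `x ↦ lᵈ f(l x)` of a Schwartz function on a space of dimension
`d`, with the junk value `0` at `l = 0`. -/
def dilate (l : ℝ) (f : 𝓢(E, ℂ)) : 𝓢(E, ℂ) :=
  if h : l = 0 then 0 else
    ((l : ℂ) ^ finrank ℝ E) • SchwartzMap.compCLMOfContinuousLinearEquiv ℂ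
      (ContinuousLinearEquiv.smulLeft (R₁ := ℝ) (M₁ := E) (Units.mk0 l h)) f

theorem dilate_apply {l : ℝ} (hl : l ≠ 0) (f : 𝓢(E, ℂ)) (x : E) :
    dilate l f x = (l : ℂ) ^ finrank ℝ E * f (l • x) := by
  simp only [dilate, dif_neg hl, smul_apply, smul_eq_mul,
    SchwartzMap.compCLMOfContinuousLinearEquiv_apply, Function.comp_apply]
  rfl

theorem one_add_pow_mul_exp_neg_sq_div_four_le (k : ℕ) {r : ℝ} (hr : 0 ≤ r) :
    (1 + r) ^ k * Real.exp (-r ^ 2 / 4) ≤ k.factorial * Real.exp 2 := by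
  have pow_le : (1 + r) ^ k ≤ k.factorial * Real.exp (1 + r) := by
    have := Real.pow_div_factorial_le_exp (1 + r) (by linarith) k
    rwa [div_le_iff₀' (by positivity)] at this
  calc (1 + r) ^ k * Real.exp (-r ^ 2 / 4)
      ≤ k.factorial * Real.exp (1 + r) * Real.exp (-r ^ 2 / 4) := by gcongr
    _ = k.factorial * Real.exp (1 + r + -r ^ 2 / 4) := by rw [Real.exp_add (1 + r), mul_assoc]
    _ ≤ k.factorial * Real.exp 2 := by
        gcongr
        nlinarith [sq_nonneg (r / 2 - 1)]

theorem exists_norm_iteratedFDeriv_exp_comp_le {g : E → ℝ} (hg : g.HasTemperateGrowth) (m : ℕ) :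
    ∃ (k : ℕ) (C : ℝ), 0 ≤ C ∧ ∀ x, ‖iteratedFDeriv ℝ m (fun x => Real.exp (g x)) x‖ ≤
      C * (1 + ‖x‖) ^ k * Real.exp (g x) := by
  obtain ⟨a, C, hC, deriv_le⟩ := hg.norm_iteratedFDeriv_le_uniform m
  refine ⟨a * m, m.factorial * (C + 1) ^ m, by positivity, fun x => ?_⟩
  have one_le : 1 ≤ (C + 1) * (1 + ‖x‖) ^ a :=
    one_le_mul_of_one_le_of_one_le (by linarith) (one_le_pow₀ (by linarith [norm_nonneg x]))
  have exp_deriv_eq (i : ℕ) : ‖iteratedFDeriv ℝ i Real.exp (g x)‖ = Real.exp (g x) := by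
    rw [norm_iteratedFDeriv_eq_norm_iteratedDeriv, iteratedDeriv_eq_iterate, Real.iter_deriv_exp,
      Real.norm_of_nonneg (Real.exp_pos _).le]
  refine (norm_iteratedFDeriv_comp_le Real.contDiff_exp hg.1 (by exact_mod_cast le_top) x
    (fun i _ => (exp_deriv_eq i).le) (fun i hi him => ?_)).trans_eq
    (b := m.factorial * Real.exp (g x) * ((C + 1) * (1 + ‖x‖) ^ a) ^ m) ?_
  · calc ‖iteratedFDeriv ℝ i g x‖ ≤ C * (1 + ‖x‖) ^ a := deriv_le i him x
      _ ≤ (C + 1) * (1 + ‖x‖) ^ a := by gcongr; linarith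
      _ ≤ ((C + 1) * (1 + ‖x‖) ^ a) ^ i := le_self_pow₀ one_le (by omega)
  · rw [mul_pow, ← pow_mul]
    ring

theorem exists_pow_mul_norm_iteratedFDeriv_gaussian_le (k m : ℕ) : ∃ C : ℝ, ∀ x : E,
    ‖x‖ ^ k * ‖iteratedFDeriv ℝ m (fun x : E => Real.exp (-‖x‖ ^ 2 / 4)) x‖ ≤ C := by
  have growth : (fun x : E => -‖x‖ ^ 2 / 4).HasTemperateGrowth := by
    simp only [div_eq_inv_mul, mul_neg]
    fun_prop
  obtain ⟨a, C, hC, deriv_le⟩ := exists_norm_iteratedFDeriv_exp_comp_le growth m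
  refine ⟨C * ((k + a).factorial * Real.exp 2), fun x => ?_⟩
  calc ‖x‖ ^ k * ‖iteratedFDeriv ℝ m (fun x : E => Real.exp (-‖x‖ ^ 2 / 4)) x‖
      ≤ (1 + ‖x‖) ^ k * (C * (1 + ‖x‖) ^ a * Real.exp (-‖x‖ ^ 2 / 4)) := by
        gcongr
        exacts [by linarith, deriv_le x]
    _ = C * ((1 + ‖x‖) ^ (k + a) * Real.exp (-‖x‖ ^ 2 / 4)) := by ring
    _ ≤ C * ((k + a).factorial * Real.exp 2) :=
        mul_le_mul_of_nonneg_left (one_add_pow_mul_exp_neg_sq_div_four_le _ (norm_nonneg x)) hC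

variable (E) in
/-- The heat kernel of `E` at time `1`, as a Schwartz function. -/
def gaussian : 𝓢(E, ℂ) :=
  (((4 * π) ^ (-(finrank ℝ E : ℝ) / 2) : ℝ) : ℂ) •
    SchwartzMap.postcompCLM (𝕜 := ℝ) Complex.ofRealCLM
      { toFun := fun x => Real.exp (-‖x‖ ^ 2 / 4)
        smooth' := Real.contDiff_exp.comp ((contDiff_norm_sq ℝ).neg.div_const _)
        decay' := exists_pow_mul_norm_iteratedFDeriv_gaussian_le }

theorem gaussian_apply (x : E) :
    gaussian E x = (((4 * π) ^ (-(finrank ℝ E : ℝ) / 2) * Real.exp (-‖x‖ ^ 2 / 4) : ℝ) : ℂ) := by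
  rw [gaussian, smul_apply, smul_eq_mul, Complex.ofReal_mul]
  rfl

variable (E) in
/-- The heat kernel of `E` at time `τ > 0`, as a Schwartz function. -/
def heatKernel (τ : ℝ) : 𝓢(E, ℂ) := dilate (√τ)⁻¹ (gaussian E)

theorem heatKernel_apply {τ : ℝ} (hτ : 0 < τ) (x : E) :
    heatKernel E τ x = (((4 * π * τ) ^ (-(finrank ℝ E : ℝ) / 2) *
      Real.exp (-‖x‖ ^ 2 / (4 * τ)) : ℝ) : ℂ) := by
  have rpow_eq : (√τ)⁻¹ ^ finrank ℝ E = τ ^ (-(finrank ℝ E : ℝ) / 2) := by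
    rw [neg_div, rpow_neg hτ.le, inv_pow, Real.sqrt_eq_rpow, ← rpow_natCast, ← rpow_mul hτ.le]
    ring_nf
  rw [heatKernel, dilate_apply (by positivity), gaussian_apply, ← Complex.ofReal_pow,
    ← Complex.ofReal_mul, rpow_eq, norm_smul, Real.norm_of_nonneg (by positivity),
    mul_rpow (by positivity) hτ.le, mul_pow, inv_pow (√τ) 2, Real.sq_sqrt hτ.le]
  congr 1
  field_simp

variable [FiniteDimensional ℝ E] [MeasurableSpace E] [BorelSpace E]

theorem fourier_dilate {l : ℝ} (hl : 0 < l) (f : 𝓢(E, ℂ)) (ξ : E) :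
    𝓕 (dilate l f) ξ = 𝓕 f (l⁻¹ • ξ) := by
  have integrand (v : E) : Real.fourierChar (-inner ℝ v ξ) • dilate l f v =
      (l : ℂ) ^ finrank ℝ E * (Real.fourierChar (-inner ℝ (l • v) (l⁻¹ • ξ)) • f (l • v)) := by
    rw [dilate_apply hl.ne', real_inner_smul_left, real_inner_smul_right,
      mul_inv_cancel_left₀ hl.ne']
    simp only [Circle.smul_def, smul_eq_mul]
    ring
  rw [SchwartzMap.fourier_coe, SchwartzMap.fourier_coe, Real.fourier_eq, Real.fourier_eq]
  simp only [integrand]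
  rw [integral_const_mul, Measure.integral_comp_smul volume
    (fun v => Real.fourierChar (-inner ℝ v (l⁻¹ • ξ)) • f v) l, abs_of_pos (by positivity),
    Complex.real_smul, ← mul_assoc, Complex.ofReal_inv, Complex.ofReal_pow,
    mul_inv_cancel₀ (pow_ne_zero _ (Complex.ofReal_ne_zero.2 hl.ne')), one_mul]

theorem eLpNorm_dilate {l : ℝ} (hl : 0 < l) (f : 𝓢(E, ℂ)) (p : ℝ≥0∞) :
    eLpNorm (dilate l f) p volume =
      ENNReal.ofReal (l ^ ((finrank ℝ E : ℝ) * (1 - p.toReal⁻¹))) * eLpNorm f p volume := by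
  have comp_smul : eLpNorm (fun x : E => f (l • x)) p volume =
      ENNReal.ofReal (l ^ (-(finrank ℝ E : ℝ) * p.toReal⁻¹)) * eLpNorm f p volume := by
    have := (Homeomorph.smulOfNeZero l hl.ne').measurableEmbedding.eLpNorm_map_measure
      (μ := (volume : Measure E)) (g := f) (p := p)
    refine this.symm.trans ?_
    change eLpNorm f p (Measure.map (l • ·) volume) = _
    rw [Measure.map_addHaar_smul _ hl.ne', eLpNorm_smul_measure_of_ne_zero (by positivity),
      smul_eq_mul, ENNReal.ofReal_rpow_of_pos (by positivity), abs_of_pos (by positivity), one_div,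
      ENNReal.toReal_inv, ← rpow_natCast, ← rpow_neg hl.le, ← rpow_mul hl.le]
  have coe_dilate : ⇑(dilate l f) = ((l : ℂ) ^ finrank ℝ E) • fun x => f (l • x) :=
    funext (dilate_apply hl.ne' f)
  rw [coe_dilate, eLpNorm_const_smul, comp_smul, ← mul_assoc, ← ofReal_norm, norm_pow,
    Complex.norm_of_nonneg hl.le, ← ENNReal.ofReal_mul (by positivity), ← rpow_natCast,
    ← rpow_add hl]
  ring_nf

theorem fourier_add_apply (f g : 𝓢(E, ℂ)) (ξ : E) : 𝓕 (f + g) ξ = 𝓕 f ξ + 𝓕 g ξ := by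
  rw [FourierTransform.fourier_add, add_apply]

theorem fourier_smul_apply (c : ℂ) (f : 𝓢(E, ℂ)) (ξ : E) : 𝓕 (c • f) ξ = c * 𝓕 f ξ := by
  rw [FourierTransform.fourier_smul, smul_apply, smul_eq_mul]

theorem fourier_convolution_eq_mul (f g : 𝓢(E, ℂ)) (ξ : E) : 𝓕 (f ⋆ₛ g) ξ = 𝓕 f ξ * 𝓕 g ξ := by
  rw [SchwartzMap.fourier_convolution, SchwartzMap.pairing_apply_apply,
    ContinuousLinearMap.mul_apply']

theorem eq_of_fourier_eq {f g : 𝓢(E, ℂ)} (h : ∀ ξ, 𝓕 f ξ = 𝓕 g ξ) : f = g :=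
  (FourierTransform.fourierEquiv ℂ (𝓢(E, ℂ))).injective (SchwartzMap.ext h)

theorem enorm_convolution_le_lconvolution (f g : 𝓢(E, ℂ)) (x : E) :
    ‖(f ⋆ₛ g) x‖ₑ ≤ ((fun y => ‖f y‖ₑ) ⋆ₗ fun y => ‖g y‖ₑ) x := by
  rw [SchwartzMap.convolution_apply, convolution_def, lconvolution_def]
  refine (enorm_integral_le_lintegral_enorm _).trans_eq (lintegral_congr fun y => ?_)
  rw [ContinuousLinearMap.mul_apply', enorm_mul, sub_eq_neg_add]

theorem eLpNorm_convolution_le {p q r : ℝ≥0∞} (hp : 1 ≤ p) (hr : 1 ≤ r) (hq : q ≠ ∞)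
    (h : r⁻¹ + p⁻¹ = 1 + q⁻¹) (f g : 𝓢(E, ℂ)) :
    eLpNorm (f ⋆ₛ g) q volume ≤ eLpNorm f r volume * eLpNorm g p volume := by
  rw [← eLpNorm_enorm f, ← eLpNorm_enorm g]
  exact (eLpNorm_mono_enorm (enorm_convolution_le_lconvolution f g)).trans
    (eLpNorm_lconvolution_le hp hr hq h f.continuous.enorm.measurable g.continuous.enorm.measurable)

theorem eLpNorm_convolution_le_eLpNorm_one_mul {p : ℝ≥0∞} (hp : 1 ≤ p) (hp_top : p ≠ ∞)
    (f g : 𝓢(E, ℂ)) : eLpNorm (f ⋆ₛ g) p volume ≤ eLpNorm f 1 volume * eLpNorm g p volume :=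
  eLpNorm_convolution_le hp le_rfl hp_top (by rw [inv_one]) f g

/- Bernstein's inequality: by Young with `1/r = 1 + 1/q - 1/p`, and `‖lᵈ f(l ·)‖_r` scales like
`l ^ (d (1 - 1/r))`. -/
theorem exists_eLpNorm_dilate_convolution_le {p q : ℝ≥0∞} (hp : 1 ≤ p) (hpq : p ≤ q) (hq : q ≠ ∞)
    (f : 𝓢(E, ℂ)) : ∃ C : ℝ≥0, ∀ l : ℝ, 0 < l → ∀ g : 𝓢(E, ℂ),
      eLpNorm (dilate l f ⋆ₛ g) q volume ≤
        C * ENNReal.ofReal (l ^ ((finrank ℝ E : ℝ) * (1 / p.toReal - 1 / q.toReal))) *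
          eLpNorm g p volume := by
  have hp_inv : p⁻¹ ≤ 1 := ENNReal.inv_le_one.2 hp
  have hp_inv_top : p⁻¹ ≠ ∞ := (hp_inv.trans_lt ENNReal.one_lt_top).ne
  have hq_inv : q⁻¹ ≤ p⁻¹ := ENNReal.inv_le_inv.2 hpq
  have hpq_inv : p⁻¹ ≤ 1 + q⁻¹ := hp_inv.trans le_self_add
  set r : ℝ≥0∞ := (1 + q⁻¹ - p⁻¹)⁻¹ with hr_def
  have h_inv : r⁻¹ + p⁻¹ = 1 + q⁻¹ := by rw [hr_def, inv_inv, tsub_add_cancel_of_le hpq_inv]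
  have hr : 1 ≤ r := by
    rw [hr_def, ENNReal.one_le_inv, tsub_le_iff_right]
    gcongr
  have h_exp : 1 - r.toReal⁻¹ = 1 / p.toReal - 1 / q.toReal := by
    rw [← ENNReal.toReal_inv, hr_def, inv_inv, ENNReal.toReal_sub_of_le hpq_inv
      (ENNReal.add_ne_top.2 ⟨ENNReal.one_ne_top, ne_top_of_le_ne_top hp_inv_top hq_inv⟩),
      ENNReal.toReal_add ENNReal.one_ne_top (ne_top_of_le_ne_top hp_inv_top hq_inv),
      ENNReal.toReal_inv, ENNReal.toReal_inv, ENNReal.toReal_one]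
    ring
  lift eLpNorm f r volume to ℝ≥0 using (f.memLp r volume).2.ne with C hC
  refine ⟨C, fun l hl g => ?_⟩
  refine (eLpNorm_convolution_le hp hr hq h_inv (dilate l f) g).trans_eq ?_
  rw [eLpNorm_dilate hl, h_exp, ← hC, mul_comm (C : ℝ≥0∞)]

theorem eLpNorm_one_dilate {l : ℝ} (hl : 0 < l) (f : 𝓢(E, ℂ)) :
    eLpNorm (dilate l f) 1 volume = eLpNorm f 1 volume := by
  simp [eLpNorm_dilate hl]

theorem exists_fourier_eq_norm_sq_mul (f : 𝓢(E, ℂ)) :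
    ∃ g : 𝓢(E, ℂ), ∀ ξ, 𝓕 g ξ = ((‖ξ‖ ^ 2 : ℝ) : ℂ) * 𝓕 f ξ := by
  refine ⟨𝓕⁻ (SchwartzMap.smulLeftCLM ℂ (fun ξ : E => ((‖ξ‖ ^ 2 : ℝ) : ℂ)) (𝓕 f)), fun ξ => ?_⟩
  rw [FourierTransform.fourier_fourierInv_eq, SchwartzMap.smulLeftCLM_apply_apply (by fun_prop),
    smul_eq_mul]

theorem exists_norm_sq_mul_fourier_eq {ψ : 𝓢(E, ℂ)} (h_compact : HasCompactSupport (𝓕 ψ : 𝓢(E, ℂ)))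
    (h_zero : (0 : E) ∉ tsupport (𝓕 ψ : 𝓢(E, ℂ))) :
    ∃ φ : 𝓢(E, ℂ), ∀ ξ, ((‖ξ‖ ^ 2 : ℝ) : ℂ) * 𝓕 φ ξ = 𝓕 ψ ξ := by
  set f : E → ℂ := fun ξ => (((‖ξ‖ ^ 2 : ℝ) : ℂ))⁻¹ * 𝓕 ψ ξ
  have f_compact : HasCompactSupport f := h_compact.mul_left
  have f_smooth : ContDiff ℝ (⊤ : ℕ∞) f := by
    rw [contDiff_iff_contDiffAt]
    intro ξ
    by_cases hξ : ξ ∈ tsupport f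
    swap
    · exact contDiffAt_const.congr_of_eventuallyEq (notMem_tsupport_iff_eventuallyEq.1 hξ)
    have hξ_ne : ξ ≠ 0 := fun h => h_zero (h ▸ tsupport_mul_subset_right hξ)
    have norm_sq_smooth : ContDiff ℝ (⊤ : ℕ∞) fun ξ : E => ((‖ξ‖ ^ 2 : ℝ) : ℂ) :=
      Complex.ofRealCLM.contDiff.comp (contDiff_norm_sq ℝ)
    exact (norm_sq_smooth.contDiffAt.inv (by simpa using hξ_ne)).mul ((𝓕 ψ).smooth _).contDiffAt
  refine ⟨𝓕⁻ (f_compact.toSchwartzMap f_smooth), fun ξ => ?_⟩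
  rw [FourierTransform.fourier_fourierInv_eq, HasCompactSupport.toSchwartzMap_toFun]
  rcases eq_or_ne ξ 0 with rfl | hξ
  · simp [image_eq_zero_of_notMem_tsupport h_zero]
  · exact mul_inv_cancel_left₀ (by simpa using hξ) _

theorem dilate_convolution_heatKernel_convolution {ψ φ G : 𝓢(E, ℂ)}
    (hφ : ∀ ξ, ((‖ξ‖ ^ 2 : ℝ) : ℂ) * 𝓕 φ ξ = 𝓕 ψ ξ)
    (hG : ∀ ξ, 𝓕 G ξ = ((‖ξ‖ ^ 2 : ℝ) : ℂ) * 𝓕 (gaussian E) ξ) {l τ : ℝ} (hl : 0 < l)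
    (hτ : 0 < τ) (g : 𝓢(E, ℂ)) :
    dilate l ψ ⋆ₛ (heatKernel E τ ⋆ₛ g) =
      (((l ^ 2 * τ)⁻¹ : ℝ) : ℂ) • (dilate (√τ)⁻¹ G ⋆ₛ (dilate l φ ⋆ₛ g)) := by
  refine eq_of_fourier_eq fun ξ => ?_
  have hsqrt : 0 < √τ := Real.sqrt_pos.2 hτ
  simp only [fourier_smul_apply, fourier_convolution_eq_mul, heatKernel, fourier_dilate hl,
    fourier_dilate (inv_pos.2 hsqrt), hG, ← hφ, inv_inv, norm_smul, norm_inv,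
    Real.norm_of_nonneg hl.le, Real.norm_of_nonneg hsqrt.le, mul_pow, Real.sq_sqrt hτ.le]
  push_cast
  field [hτ.ne']

theorem min_one_inv_le_rpow_neg {a b : ℝ} (ha : 0 < a) (hb₀ : 0 ≤ b) (hb₁ : b ≤ 1) :
    min 1 a⁻¹ ≤ a ^ (-b) := by
  rcases le_total a 1 with h | h
  · exact min_le_of_left_le (one_le_rpow_of_pos_of_le_one_of_nonpos ha h (by linarith))
  · refine min_le_of_right_le ?_
    rw [← rpow_neg_one]
    exact rpow_le_rpow_of_exponent_le h (by linarith)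

theorem eLpNorm_heatKernel_convolution_le {p : ℝ≥0∞} (hp : 1 ≤ p) (hp_top : p ≠ ∞) {τ : ℝ}
    (hτ : 0 < τ) (g : 𝓢(E, ℂ)) :
    eLpNorm (heatKernel E τ ⋆ₛ g) p volume ≤
      eLpNorm (gaussian E) 1 volume * eLpNorm g p volume := by
  rw [← eLpNorm_one_dilate (inv_pos.2 (Real.sqrt_pos.2 hτ)) (gaussian E)]
  exact eLpNorm_convolution_le_eLpNorm_one_mul hp hp_top _ _

theorem exists_eLpNorm_dilate_convolution_heatKernel_le_inv {p q : ℝ≥0∞} (hp : 1 ≤ p)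
    (hpq : p ≤ q) (hq : q ≠ ∞) {ψ : 𝓢(E, ℂ)} (h_compact : HasCompactSupport (𝓕 ψ : 𝓢(E, ℂ)))
    (h_zero : (0 : E) ∉ tsupport (𝓕 ψ : 𝓢(E, ℂ))) :
    ∃ C : ℝ≥0, ∀ l : ℝ, 0 < l → ∀ τ : ℝ, 0 < τ → ∀ g : 𝓢(E, ℂ),
      eLpNorm (dilate l ψ ⋆ₛ (heatKernel E τ ⋆ₛ g)) q volume ≤
        C * ENNReal.ofReal (l ^ ((finrank ℝ E : ℝ) * (1 / p.toReal - 1 / q.toReal)) *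
          (l ^ 2 * τ)⁻¹) * eLpNorm g p volume := by
  obtain ⟨φ, hφ⟩ := exists_norm_sq_mul_fourier_eq h_compact h_zero
  obtain ⟨G, hG⟩ := exists_fourier_eq_norm_sq_mul (gaussian E)
  obtain ⟨C, hC⟩ := exists_eLpNorm_dilate_convolution_le hp hpq hq φ
  lift eLpNorm G 1 volume to ℝ≥0 using (G.memLp 1 volume).2.ne with N hN
  refine ⟨N * C, fun l hl τ hτ g => ?_⟩
  rw [dilate_convolution_heatKernel_convolution hφ hG hl hτ, FunLike.coe_smul,
    eLpNorm_const_smul, ← ofReal_norm, Complex.norm_of_nonneg (by positivity),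
    ENNReal.ofReal_mul (by positivity)]
  calc _ ≤ ENNReal.ofReal (l ^ 2 * τ)⁻¹ * (N * (C * ENNReal.ofReal (l ^
          ((finrank ℝ E : ℝ) * (1 / p.toReal - 1 / q.toReal))) * eLpNorm g p volume)) := by
        gcongr
        refine (eLpNorm_convolution_le_eLpNorm_one_mul (hp.trans hpq) hq _ _).trans ?_
        rw [eLpNorm_one_dilate (by positivity), hN]
        gcongr
        exact hC l hl g
    _ = _ := by
        push_cast
        ring

/- On frequencies of size `l` the heat semigroup is bounded, and it also gains the factor
`(l² τ)⁻¹`, because `‖ξ‖² exp (-4π² ‖ξ‖²)` is the Fourier transform of a Schwartz function. -/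
theorem exists_eLpNorm_dilate_convolution_heatKernel_le {p q : ℝ≥0∞} (hp : 1 ≤ p) (hpq : p ≤ q)
    (hq : q ≠ ∞) {b : ℝ} (hb₀ : 0 ≤ b) (hb₁ : b ≤ 1) {ψ : 𝓢(E, ℂ)}
    (h_compact : HasCompactSupport (𝓕 ψ : 𝓢(E, ℂ)))
    (h_zero : (0 : E) ∉ tsupport (𝓕 ψ : 𝓢(E, ℂ))) :
    ∃ C : ℝ≥0, ∀ l : ℝ, 0 < l → ∀ τ : ℝ, 0 < τ → ∀ g : 𝓢(E, ℂ),
      eLpNorm (dilate l ψ ⋆ₛ (heatKernel E τ ⋆ₛ g)) q volume ≤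
        C * ENNReal.ofReal (l ^ ((finrank ℝ E : ℝ) * (1 / p.toReal - 1 / q.toReal)) *
          (l ^ 2 * τ) ^ (-b)) * eLpNorm g p volume := by
  obtain ⟨C, hC⟩ := exists_eLpNorm_dilate_convolution_le hp hpq hq ψ
  obtain ⟨D, decay⟩ :=
    exists_eLpNorm_dilate_convolution_heatKernel_le_inv hp hpq hq h_compact h_zero
  set d := (finrank ℝ E : ℝ) * (1 / p.toReal - 1 / q.toReal)
  lift eLpNorm (gaussian E) 1 volume to ℝ≥0 using ((gaussian E).memLp 1 volume).2.ne with M hM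
  refine ⟨max (M * C) D, fun l hl τ hτ g => ?_⟩
  have bounded : eLpNorm (dilate l ψ ⋆ₛ (heatKernel E τ ⋆ₛ g)) q volume ≤
      (M * C : ℝ≥0) * ENNReal.ofReal (l ^ d * 1) * eLpNorm g p volume := by
    have comm : dilate l ψ ⋆ₛ (heatKernel E τ ⋆ₛ g) = heatKernel E τ ⋆ₛ (dilate l ψ ⋆ₛ g) :=
      eq_of_fourier_eq fun ξ => by simp only [fourier_convolution_eq_mul, mul_left_comm]
    rw [comm, mul_one, ENNReal.coe_mul, mul_assoc, mul_assoc, ← mul_assoc (C : ℝ≥0∞)]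
    refine (eLpNorm_heatKernel_convolution_le (hp.trans hpq) hq hτ _).trans ?_
    rw [hM]
    gcongr
    exact hC l hl g
  have min_le := min_one_inv_le_rpow_neg (a := l ^ 2 * τ) (by positivity) hb₀ hb₁
  rcases min_le_iff.1 min_le with h | h
  · refine bounded.trans ?_
    gcongr
    exact le_max_left _ _
  · refine (decay l hl τ hτ g).trans ?_
    gcongr
    exact le_max_right _ _

theorem dilate_convolution_apply {l : ℝ} (hl : 0 < l) (f g : 𝓢(E, ℂ)) (x : E) :
    (dilate l f ⋆ₛ g) x = ∫ z, f z * g (x - l⁻¹ • z) := by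
  have change_of_variables :=
    Measure.integral_comp_smul (volume : Measure E) (fun z => f z * g (x - l⁻¹ • z)) l
  simp only [inv_smul_smul₀ hl.ne', abs_inv, abs_of_pos (pow_pos hl _)] at change_of_variables
  rw [← inv_smul_eq_iff₀ (by positivity), Complex.real_smul] at change_of_variables
  simp only [SchwartzMap.convolution_apply, convolution_def, dilate_apply hl.ne',
    ContinuousLinearMap.mul_apply', mul_assoc, integral_const_mul]
  rw [← change_of_variables]
  push_cast
  rw [inv_inv]

theorem tendsto_dilate_convolution (f g : 𝓢(E, ℂ)) (x : E) :
    Tendsto (fun l : ℝ => (dilate l f ⋆ₛ g) x) atTop (nhds ((∫ z, f z) * g x)) := by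
  rw [← integral_mul_const]
  refine Tendsto.congr' ((eventually_gt_atTop 0).mono fun l hl =>
    (dilate_convolution_apply hl f g x).symm) ?_
  refine tendsto_integral_filter_of_dominated_convergence
    (fun z => ‖f z‖ * SchwartzMap.seminorm ℝ 0 0 g) (.of_forall fun l => ?_)
    (.of_forall fun l => .of_forall fun z => ?_) (f.integrable.norm.mul_const _)
    (.of_forall fun z => ?_)
  · exact (f.continuous.mul (g.continuous.comp (by fun_prop))).aestronglyMeasurable
  · rw [norm_mul]
    gcongr
    exact SchwartzMap.norm_le_seminorm ℝ g _
  · have arg_tendsto : Tendsto (fun l : ℝ => x - l⁻¹ • z) atTop (nhds (x - (0 : ℝ) • z)) :=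
      tendsto_const_nhds.sub (tendsto_inv_atTop_zero.smul_const z)
    rw [zero_smul, sub_zero] at arg_tendsto
    exact ((g.continuous.tendsto x).comp arg_tendsto).const_mul _

end Schwartz

section LittlewoodPaley

variable {ψ₀ Ψ : 𝓢(Rn n, ℝ)}

/-- A real-valued Schwartz function, viewed as complex-valued. -/
def complexify (f : 𝓢(Rn n, ℝ)) : 𝓢(Rn n, ℂ) :=
  SchwartzMap.postcompCLM (𝕜 := ℝ) Complex.ofRealCLM f

theorem complexify_apply (f : 𝓢(Rn n, ℝ)) (x : Rn n) : complexify f x = (f x : ℂ) := rfl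

theorem fourier_complexify_apply (f : 𝓢(Rn n, ℝ)) (ξ : Rn n) : 𝓕 (complexify f) ξ = ftC f ξ :=
  rfl

theorem IsLPF.ftC_eq_zero (hψ : IsLPF n ψ₀) {ξ : Rn n} (h : ‖ξ‖ ≤ 1 / 2 ∨ 2 ≤ ‖ξ‖) :
    ftC ψ₀ ξ = 0 := by
  by_contra h_ne
  have := hψ.ft_supp ξ h_ne
  rcases h with h | h <;> linarith

theorem IsLPF.hasCompactSupport_fourier (hψ : IsLPF n ψ₀) :
    HasCompactSupport (𝓕 (complexify ψ₀) : 𝓢(Rn n, ℂ)) :=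
  HasCompactSupport.intro (isCompact_closedBall 0 2) fun ξ hξ => by
    rw [mem_closedBall_zero_iff, not_le] at hξ
    exact hψ.ftC_eq_zero (Or.inr hξ.le)

theorem IsLPF.zero_notMem_tsupport_fourier (hψ : IsLPF n ψ₀) :
    (0 : Rn n) ∉ tsupport (𝓕 (complexify ψ₀) : 𝓢(Rn n, ℂ)) := by
  have subset : tsupport (𝓕 (complexify ψ₀) : 𝓢(Rn n, ℂ)) ⊆ {ξ | 1 / 2 ≤ ‖ξ‖} :=
    closure_minimal (fun ξ hξ => (hψ.ft_supp ξ hξ).1.le)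
      (isClosed_le continuous_const continuous_norm)
  intro h
  have := subset h
  norm_num at this

theorem IsLPF.summable_ftC (hψ : IsLPF n ψ₀) (ξ : Rn n) :
    Summable fun k : ℕ => ftC ψ₀ ((2 : ℝ) ^ (-(k : ℤ)) • ξ) := by
  rcases eq_or_ne ξ 0 with rfl | hξ
  · simp [hψ.ftC_eq_zero (ξ := 0) (by simp)]
  · exact (hψ.ft_sum ξ hξ).summable.comp_injective Nat.cast_injective

theorem IsLowPiece.ftC_eq_one (hΨ : IsLowPiece ψ₀ Ψ) (hψ : IsLPF n ψ₀) {ξ : Rn n}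
    (h : ‖ξ‖ ≤ 1 / 2) : ftC Ψ ξ = 1 := by
  have term_eq_zero (k : ℕ) : ftC ψ₀ ((2 : ℝ) ^ (-(k : ℤ)) • ξ) = 0 := by
    refine hψ.ftC_eq_zero (Or.inl ?_)
    rw [norm_smul, Real.norm_of_nonneg (by positivity)]
    have : (2 : ℝ) ^ (-(k : ℤ)) ≤ 1 := zpow_le_one_of_nonpos₀ one_le_two (by simp)
    exact (mul_le_of_le_one_left (norm_nonneg ξ) this).trans h
  simp only [hΨ ξ, term_eq_zero, tsum_zero, sub_zero]

theorem IsLowPiece.ftC_eq_zero (hΨ : IsLowPiece ψ₀ Ψ) (hψ : IsLPF n ψ₀) {ξ : Rn n}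
    (h : 1 ≤ ‖ξ‖) : ftC Ψ ξ = 0 := by
  have term_eq_zero : ∀ j ∉ Set.range ((↑) : ℕ → ℤ), ftC ψ₀ ((2 : ℝ) ^ (-j) • ξ) = 0 := by
    intro j hj
    have j_neg : j < 0 := by
      by_contra! j_nonneg
      exact hj ⟨j.toNat, Int.toNat_of_nonneg j_nonneg⟩
    refine hψ.ftC_eq_zero (Or.inr ?_)
    rw [norm_smul, Real.norm_of_nonneg (by positivity)]
    have : (2 : ℝ) ^ (1 : ℤ) ≤ 2 ^ (-j) := zpow_le_zpow_right₀ one_le_two (by omega)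
    nlinarith
  have hξ : ξ ≠ 0 := norm_pos_iff.1 (by linarith)
  rw [hΨ ξ, sub_eq_zero]
  exact ((Function.Injective.hasSum_iff Nat.cast_injective term_eq_zero).2
    (hψ.ft_sum ξ hξ)).tsum_eq.symm

theorem IsLowPiece.ftC_eq_sub (hΨ : IsLowPiece ψ₀ Ψ) (hψ : IsLPF n ψ₀) (ξ : Rn n) :
    ftC ψ₀ ξ = ftC Ψ ((2 : ℝ)⁻¹ • ξ) - ftC Ψ ξ := by
  have half_smul (k : ℕ) :
      (2 : ℝ) ^ (-(k : ℤ)) • (2 : ℝ)⁻¹ • ξ = (2 : ℝ) ^ (-((k + 1 : ℕ) : ℤ)) • ξ := by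
    rw [smul_smul, ← zpow_neg_one, ← zpow_add₀ two_ne_zero]
    push_cast
    ring_nf
  rw [hΨ ξ, hΨ, (hψ.summable_ftC ξ).tsum_eq_zero_add]
  simp only [half_smul, Nat.cast_zero, neg_zero, zpow_zero, one_smul]
  ring

/-- The convolution kernels of the inhomogeneous Littlewood–Paley decomposition, enumerated as
`Ψ, ψ₀, ψ₁, …`; the block `j + 1` has frequencies of size `2 ^ j`. -/
def lpBlock (ψ₀ Ψ : 𝓢(Rn n, ℝ)) : ℕ → 𝓢(Rn n, ℂ)
  | 0 => complexify Ψ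
  | j + 1 => dilate ((2 : ℝ) ^ j) (complexify ψ₀)

theorem fourier_lpBlock_succ (ψ₀ Ψ : 𝓢(Rn n, ℝ)) (j : ℕ) (ξ : Rn n) :
    𝓕 (lpBlock ψ₀ Ψ (j + 1)) ξ = ftC ψ₀ (((2 : ℝ) ^ j)⁻¹ • ξ) := by
  rw [lpBlock, fourier_dilate (by positivity), fourier_complexify_apply]

theorem IsLowPiece.sum_lpBlock (hΨ : IsLowPiece ψ₀ Ψ) (hψ : IsLPF n ψ₀) (j : ℕ) :
    ∑ i ∈ Finset.range (j + 1), lpBlock ψ₀ Ψ i = dilate ((2 : ℝ) ^ j) (complexify Ψ) := by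
  refine eq_of_fourier_eq fun ξ => ?_
  rw [fourier_dilate (by positivity), fourier_complexify_apply]
  induction j with
  | zero => simp [lpBlock, fourier_complexify_apply]
  | succ j ih =>
    rw [Finset.sum_range_succ, fourier_add_apply, ih, fourier_lpBlock_succ, hΨ.ftC_eq_sub hψ,
      smul_smul, ← mul_inv, ← pow_succ', add_sub_cancel]

theorem IsLowPiece.lpBlock_convolution_neighbours (hΨ : IsLowPiece ψ₀ Ψ) (hψ : IsLPF n ψ₀)
    (j : ℕ) :
    lpBlock ψ₀ Ψ (j + 1) ⋆ₛ (lpBlock ψ₀ Ψ j + lpBlock ψ₀ Ψ (j + 1) + lpBlock ψ₀ Ψ (j + 2)) =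
      lpBlock ψ₀ Ψ (j + 1) := by
  refine eq_of_fourier_eq fun ξ => ?_
  rw [fourier_convolution_eq_mul]
  rcases eq_or_ne (𝓕 (lpBlock ψ₀ Ψ (j + 1)) ξ) 0 with h | h
  · rw [h, zero_mul]
  have norm_ξ := hψ.ft_supp _ (fourier_lpBlock_succ ψ₀ Ψ j ξ ▸ h)
  rw [norm_smul, Real.norm_of_nonneg (by positivity)] at norm_ξ
  have sum_below : 𝓕 (∑ i ∈ Finset.range j, lpBlock ψ₀ Ψ i) ξ = 0 := by
    rcases j with _ | j
    · simp
    rw [hΨ.sum_lpBlock hψ, fourier_dilate (by positivity)]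
    refine hΨ.ftC_eq_zero hψ ?_
    rw [norm_smul, Real.norm_of_nonneg (by positivity)]
    rw [pow_succ, mul_inv] at norm_ξ
    linarith [norm_ξ.1]
  have sum_upto : 𝓕 (∑ i ∈ Finset.range (j + 2 + 1), lpBlock ψ₀ Ψ i) ξ = 1 := by
    rw [hΨ.sum_lpBlock hψ, fourier_dilate (by positivity)]
    refine hΨ.ftC_eq_one hψ ?_
    rw [norm_smul, Real.norm_of_nonneg (by positivity), pow_add, mul_inv]
    linarith [norm_ξ.2]
  rw [Finset.sum_range_succ, Finset.sum_range_succ, Finset.sum_range_succ, fourier_add_apply,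
    fourier_add_apply, fourier_add_apply, sum_below, zero_add] at sum_upto
  rw [fourier_add_apply, fourier_add_apply, sum_upto, mul_one]

end LittlewoodPaley

section BesovNorm

variable {ψ₀ Ψ : 𝓢(Rn n, ℝ)} {p q : ℝ≥0∞} {s : ℝ}

theorem ofReal_convolution_eq {K f : Rn n → ℝ} {K' g : 𝓢(Rn n, ℂ)}
    (hK : ∀ x, (K x : ℂ) = K' x) (hf : ∀ x, (f x : ℂ) = g x) (x : Rn n) :
    ((convolution K f (ContinuousLinearMap.mul ℝ ℝ) volume x : ℝ) : ℂ) = (K' ⋆ₛ g) x := by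
  rw [SchwartzMap.convolution_apply, convolution_def, convolution_def, ← integral_complex_ofReal]
  simp only [ContinuousLinearMap.mul_apply', Complex.ofReal_mul, hK, hf]

theorem eLpNorm_eq_of_ofReal_eq {f : Rn n → ℝ} {g : Rn n → ℂ} (h : ∀ x, (f x : ℂ) = g x) :
    eLpNorm f p volume = eLpNorm g p volume :=
  eLpNorm_congr_norm_ae (.of_forall fun x => by rw [← h, Complex.norm_real])

theorem ofReal_lpKernel_eq (ψ₀ Ψ : 𝓢(Rn n, ℝ)) (j : ℕ) (x : Rn n) :
    (lpKernel ψ₀ j x : ℂ) = lpBlock ψ₀ Ψ (j + 1) x := by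
  rw [lpBlock, dilate_apply (by positivity), complexify_apply, lpKernel, finrank_euclideanSpace_fin]
  norm_cast
  rw [pow_mul]

theorem ofReal_heatOp_eq {τ : ℝ} (hτ : 0 < τ) {f : Rn n → ℝ} {g : 𝓢(Rn n, ℂ)}
    (hfg : ∀ x, (f x : ℂ) = g x) (x : Rn n) :
    (heatOp n τ f x : ℂ) = (heatKernel (Rn n) τ ⋆ₛ g) x :=
  ofReal_convolution_eq
    (fun x => by rw [heatKernel_apply hτ, finrank_euclideanSpace_fin]) hfg x

theorem besovNorm_eq_add_eLpNorm_count (hq : q ≠ 0) (f : Rn n → ℝ) :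
    besovNorm ψ₀ Ψ s p q f =
      eLpNorm (convolution Ψ f (ContinuousLinearMap.mul ℝ ℝ) volume) p volume +
        eLpNorm (fun j : ℕ => ENNReal.ofReal (2 ^ ((j : ℝ) * s)) * eLpNorm (lpProj ψ₀ j f) p volume)
          q Measure.count := by
  rw [besovNorm, eLpNorm_count_eq_ite hq]

/-- The sequence `(‖Ψ ∗ g‖_p, ‖Δ₀ g‖_p, 2ˢ ‖Δ₁ g‖_p, …)` whose `ℓ^q` norm is the Besov norm of
`g`, up to equivalence. The block `j` carries the weight `2^{(j - 1) s}`, except that the block `0`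
carries the weight `1`: the subtraction is truncated. -/
def besovSeq (ψ₀ Ψ : 𝓢(Rn n, ℝ)) (s : ℝ) (p : ℝ≥0∞) (g : 𝓢(Rn n, ℂ)) (j : ℕ) : ℝ≥0∞ :=
  ENNReal.ofReal (2 ^ (((j - 1 : ℕ) : ℝ) * s)) * eLpNorm (lpBlock ψ₀ Ψ j ⋆ₛ g) p volume

theorem besovNorm_eq_besovSeq (hq : q ≠ 0) {f : Rn n → ℝ} {g : 𝓢(Rn n, ℂ)}
    (hfg : ∀ x, (f x : ℂ) = g x) :
    besovNorm ψ₀ Ψ s p q f = besovSeq ψ₀ Ψ s p g 0 +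
      eLpNorm (fun j => besovSeq ψ₀ Ψ s p g (j + 1)) q Measure.count := by
  have low_eq : eLpNorm (convolution Ψ f (ContinuousLinearMap.mul ℝ ℝ) volume) p volume =
      eLpNorm (lpBlock ψ₀ Ψ 0 ⋆ₛ g) p volume :=
    eLpNorm_eq_of_ofReal_eq (ofReal_convolution_eq (complexify_apply Ψ) hfg)
  have high_eq (j : ℕ) :
      eLpNorm (lpProj ψ₀ j f) p volume = eLpNorm (lpBlock ψ₀ Ψ (j + 1) ⋆ₛ g) p volume :=
    eLpNorm_eq_of_ofReal_eq (ofReal_convolution_eq (ofReal_lpKernel_eq ψ₀ Ψ j) hfg)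
  simp [besovNorm_eq_add_eLpNorm_count hq, low_eq, high_eq, besovSeq]

theorem eLpNorm_besovSeq_le_besovNorm (hq : 1 ≤ q) {f : Rn n → ℝ} {g : 𝓢(Rn n, ℂ)}
    (hfg : ∀ x, (f x : ℂ) = g x) :
    eLpNorm (besovSeq ψ₀ Ψ s p g) q Measure.count ≤ besovNorm ψ₀ Ψ s p q f := by
  rw [besovNorm_eq_besovSeq (one_pos.trans_le hq).ne' hfg]
  exact eLpNorm_count_nat_le_add hq _

theorem eLpNorm_lpBlock_convolution_le (hq : q ≠ 0) (g : 𝓢(Rn n, ℂ)) (j : ℕ) :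
    eLpNorm (lpBlock ψ₀ Ψ j ⋆ₛ g) p volume ≤ ENNReal.ofReal (2 ^ (-(((j - 1 : ℕ) : ℝ) * s))) *
      eLpNorm (besovSeq ψ₀ Ψ s p g) q Measure.count := by
  have le_norm := enorm_le_eLpNorm_count (besovSeq ψ₀ Ψ s p g) j hq
  calc eLpNorm (lpBlock ψ₀ Ψ j ⋆ₛ g) p volume
      = ENNReal.ofReal (2 ^ (-(((j - 1 : ℕ) : ℝ) * s))) * besovSeq ψ₀ Ψ s p g j := by
        rw [besovSeq, ← mul_assoc, ← ENNReal.ofReal_mul (by positivity), ← rpow_add two_pos,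
          neg_add_cancel, rpow_zero, ENNReal.ofReal_one, one_mul]
    _ ≤ _ := by
        gcongr
        exact le_norm

end BesovNorm

section HeatSmoothing

variable {ψ₀ Ψ : 𝓢(Rn n, ℝ)} {p q : ℝ≥0∞} {s : ℝ}

theorem IsLowPiece.integral_complexify (hΨ : IsLowPiece ψ₀ Ψ) (hψ : IsLPF n ψ₀) :
    ∫ z, complexify Ψ z = 1 := by
  rw [← hΨ.ftC_eq_one hψ (ξ := 0) (by simp), ftC, Real.fourier_eq]
  simp [complexify_apply]

theorem IsLowPiece.tendsto_sum_lpBlock_convolution (hΨ : IsLowPiece ψ₀ Ψ) (hψ : IsLPF n ψ₀)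
    (g : 𝓢(Rn n, ℂ)) (x : Rn n) :
    Tendsto (fun j => (∑ i ∈ Finset.range (j + 1), lpBlock ψ₀ Ψ i ⋆ₛ g) x) atTop (nhds (g x)) := by
  have tendsto := (tendsto_dilate_convolution (complexify Ψ) g x).comp
    (tendsto_pow_atTop_atTop_of_one_lt (one_lt_two (α := ℝ)))
  rw [hΨ.integral_complexify hψ, one_mul] at tendsto
  refine tendsto.congr fun j => ?_
  rw [Function.comp_apply, ← hΨ.sum_lpBlock hψ, map_sum, sum_apply]

theorem IsLowPiece.eLpNorm_le_tsum_lpBlock (hΨ : IsLowPiece ψ₀ Ψ) (hψ : IsLPF n ψ₀) (hp : 1 ≤ p)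
    (g : 𝓢(Rn n, ℂ)) :
    eLpNorm g p volume ≤ ∑' j, eLpNorm (lpBlock ψ₀ Ψ j ⋆ₛ g) p volume := by
  refine (Lp.eLpNorm_lim_le_liminf_eLpNorm
    (fun j => (SchwartzMap.continuous _).aestronglyMeasurable) g
    (.of_forall (hΨ.tendsto_sum_lpBlock_convolution hψ g))).trans ?_
  refine (liminf_le_liminf (.of_forall fun j => ?_)).trans_eq
    (liminf_const (∑' j, eLpNorm (lpBlock ψ₀ Ψ j ⋆ₛ g) p volume))
  rw [FunLike.coe_sum]
  exact (eLpNorm_sum_le (fun i _ => (SchwartzMap.continuous _).aestronglyMeasurable) hp).trans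
    (ENNReal.sum_le_tsum _)

theorem summable_two_rpow_neg_pred_mul (hs : 0 < s) :
    Summable fun j : ℕ => (2 : ℝ) ^ (-(((j - 1 : ℕ) : ℝ) * s)) := by
  rw [← summable_nat_add_iff 1]
  refine (summable_geometric_of_lt_one (r := (2 : ℝ) ^ (-s)) (by positivity)
    (rpow_lt_one_of_one_lt_of_neg one_lt_two (neg_neg_iff_pos.2 hs))).congr fun j => ?_
  rw [← rpow_mul_natCast two_pos.le, Nat.add_sub_cancel, neg_mul, mul_comm]

theorem IsLowPiece.exists_eLpNorm_le_besovSeq (hΨ : IsLowPiece ψ₀ Ψ) (hψ : IsLPF n ψ₀)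
    (hp : 1 ≤ p) (hq : q ≠ 0) (hs : 0 < s) :
    ∃ C : ℝ≥0, ∀ g : 𝓢(Rn n, ℂ),
      eLpNorm g p volume ≤ C * eLpNorm (besovSeq ψ₀ Ψ s p g) q Measure.count := by
  lift ∑' j : ℕ, ENNReal.ofReal (2 ^ (-(((j - 1 : ℕ) : ℝ) * s))) to ℝ≥0 using
    (summable_two_rpow_neg_pred_mul hs).tsum_ofReal_ne_top with C hC
  refine ⟨C, fun g => ?_⟩
  rw [hC, ← ENNReal.tsum_mul_right]
  exact (hΨ.eLpNorm_le_tsum_lpBlock hψ hp g).trans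
    (ENNReal.tsum_le_tsum (eLpNorm_lpBlock_convolution_le hq g))

theorem ofReal_mul_eLpNorm_lpBlock_le (hs : 0 ≤ s) {i j : ℕ} (hij : j ≤ i) (g : 𝓢(Rn n, ℂ)) :
    ENNReal.ofReal (2 ^ ((j : ℝ) * s)) * eLpNorm (lpBlock ψ₀ Ψ i ⋆ₛ g) p volume ≤
      ENNReal.ofReal (2 ^ s) * besovSeq ψ₀ Ψ s p g i := by
  have le_pred : (j : ℝ) ≤ 1 + ((i - 1 : ℕ) : ℝ) := by exact_mod_cast (by omega)
  rw [besovSeq, ← mul_assoc, ← ENNReal.ofReal_mul (by positivity), ← rpow_add two_pos,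
    ← one_add_mul]
  gcongr
  exact one_le_two

theorem ofReal_mul_eLpNorm_neighbours_le (hp : 1 ≤ p) (hs : 0 ≤ s) (g : 𝓢(Rn n, ℂ)) (j : ℕ) :
    ENNReal.ofReal (2 ^ ((j : ℝ) * s)) * eLpNorm
        ((lpBlock ψ₀ Ψ j + lpBlock ψ₀ Ψ (j + 1) + lpBlock ψ₀ Ψ (j + 2)) ⋆ₛ g) p volume ≤
      ENNReal.ofReal (2 ^ s) * (besovSeq ψ₀ Ψ s p g j + besovSeq ψ₀ Ψ s p g (j + 1) +
        besovSeq ψ₀ Ψ s p g (j + 2)) := by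
  have aesm (f : 𝓢(Rn n, ℂ)) : AEStronglyMeasurable f volume := f.continuous.aestronglyMeasurable
  have triangle : eLpNorm
      ((lpBlock ψ₀ Ψ j + lpBlock ψ₀ Ψ (j + 1) + lpBlock ψ₀ Ψ (j + 2)) ⋆ₛ g) p volume ≤
      eLpNorm (lpBlock ψ₀ Ψ j ⋆ₛ g) p volume + eLpNorm (lpBlock ψ₀ Ψ (j + 1) ⋆ₛ g) p volume +
        eLpNorm (lpBlock ψ₀ Ψ (j + 2) ⋆ₛ g) p volume := by
    simp only [map_add, add_apply, FunLike.coe_add]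
    exact (eLpNorm_add_le ((aesm _).add (aesm _)) (aesm _) hp).trans
      (add_le_add_left (eLpNorm_add_le (aesm _) (aesm _) hp) _)
  refine (mul_le_mul_right triangle _).trans ?_
  simp only [mul_add]
  exact add_le_add (add_le_add (ofReal_mul_eLpNorm_lpBlock_le hs le_rfl g)
    (ofReal_mul_eLpNorm_lpBlock_le hs (j.le_add_right 1) g))
    (ofReal_mul_eLpNorm_lpBlock_le hs (j.le_add_right 2) g)

theorem IsLowPiece.exists_eLpNorm_heatKernel_convolution_le (hΨ : IsLowPiece ψ₀ Ψ)
    (hψ : IsLPF n ψ₀) (hp : 1 ≤ p) (hp_top : p ≠ ∞) (hq : q ≠ 0) (hs : 0 < s) :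
    ∃ C : ℝ≥0, ∀ τ : ℝ, 0 < τ → ∀ g : 𝓢(Rn n, ℂ),
      eLpNorm (heatKernel (Rn n) τ ⋆ₛ g) p volume ≤
        C * eLpNorm (besovSeq ψ₀ Ψ s p g) q Measure.count := by
  obtain ⟨C, embedding⟩ := hΨ.exists_eLpNorm_le_besovSeq hψ hp hq hs
  lift eLpNorm (gaussian (Rn n)) 1 volume to ℝ≥0 using
    ((gaussian (Rn n)).memLp 1 volume).2.ne with M hM
  refine ⟨M * C, fun τ hτ g => (eLpNorm_heatKernel_convolution_le hp hp_top hτ g).trans ?_⟩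
  rw [← hM, ENNReal.coe_mul, mul_assoc]
  exact mul_le_mul_right (embedding g) _

theorem IsLowPiece.exists_eLpNorm_heatOp_le (hΨ : IsLowPiece ψ₀ Ψ) (hψ : IsLPF n ψ₀) (hp : 1 ≤ p)
    (hp_top : p ≠ ∞) (hq : 1 ≤ q) (hs : 0 < s) :
    ∃ C : ℝ≥0, ∀ τ : ℝ, 0 < τ → ∀ f : 𝓢(Rn n, ℝ),
      eLpNorm (heatOp n τ f) p volume ≤ C * besovNorm ψ₀ Ψ s p q f := by
  obtain ⟨C, bound⟩ := hΨ.exists_eLpNorm_heatKernel_convolution_le hψ hp hp_top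
    (one_pos.trans_le hq).ne' hs
  refine ⟨C, fun τ hτ f => ?_⟩
  have complexify_eq (x : Rn n) : (f x : ℂ) = complexify f x := (complexify_apply f x).symm
  rw [eLpNorm_eq_of_ofReal_eq (ofReal_heatOp_eq hτ complexify_eq)]
  exact (bound τ hτ _).trans
    (mul_le_mul_right (eLpNorm_besovSeq_le_besovNorm hq complexify_eq) _)

theorem IsLowPiece.exists_besovSeq_zero_heatKernel_le (hΨ : IsLowPiece ψ₀ Ψ) (hψ : IsLPF n ψ₀)
    {p₀ p₁ : ℝ≥0∞} (hp₀ : 1 ≤ p₀) (hp₀₁ : p₀ ≤ p₁) (hp₁ : p₁ ≠ ∞) (hq : q ≠ 0) {s₀ : ℝ}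
    (hs₀ : 0 < s₀) (s₁ : ℝ) :
    ∃ C : ℝ≥0, ∀ τ : ℝ, 0 < τ → ∀ g : 𝓢(Rn n, ℂ),
      besovSeq ψ₀ Ψ s₁ p₁ (heatKernel (Rn n) τ ⋆ₛ g) 0 ≤
        C * eLpNorm (besovSeq ψ₀ Ψ s₀ p₀ g) q Measure.count := by
  obtain ⟨C, bernstein⟩ := exists_eLpNorm_dilate_convolution_le hp₀ hp₀₁ hp₁ (complexify Ψ)
  obtain ⟨D, bound⟩ := hΨ.exists_eLpNorm_heatKernel_convolution_le hψ hp₀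
    (ne_top_of_le_ne_top hp₁ hp₀₁) hq hs₀
  have block_zero : dilate (1 : ℝ) (complexify Ψ) = lpBlock ψ₀ Ψ 0 := by
    simpa using (hΨ.sum_lpBlock hψ 0).symm
  refine ⟨C * D, fun τ hτ g => ?_⟩
  calc besovSeq ψ₀ Ψ s₁ p₁ (heatKernel (Rn n) τ ⋆ₛ g) 0
      = eLpNorm (lpBlock ψ₀ Ψ 0 ⋆ₛ (heatKernel (Rn n) τ ⋆ₛ g)) p₁ volume := by simp [besovSeq]
    _ ≤ C * eLpNorm (heatKernel (Rn n) τ ⋆ₛ g) p₀ volume := by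
        simpa [block_zero] using bernstein 1 one_pos (heatKernel (Rn n) τ ⋆ₛ g)
    _ ≤ C * (D * eLpNorm (besovSeq ψ₀ Ψ s₀ p₀ g) q Measure.count) :=
        mul_le_mul_right (bound τ hτ g) _
    _ = _ := by rw [ENNReal.coe_mul, mul_assoc]

theorem two_rpow_mul_rpow_mul_sq_mul_rpow {τ : ℝ} (hτ : 0 < τ) (j : ℕ) {s₀ s₁ d σ : ℝ}
    (hσ : σ = s₁ - s₀ + d) :
    (2 : ℝ) ^ ((j : ℝ) * s₁) * (((2 : ℝ) ^ j) ^ d * (((2 : ℝ) ^ j) ^ 2 * τ) ^ (-(σ / 2))) =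
      τ ^ (-(σ / 2)) * 2 ^ ((j : ℝ) * s₀) := by
  rw [mul_rpow (by positivity) hτ.le, ← rpow_natCast 2 j, ← rpow_natCast _ 2,
    ← rpow_mul two_pos.le, ← rpow_mul two_pos.le, ← rpow_mul two_pos.le, ← mul_assoc, ← mul_assoc,
    ← rpow_add two_pos, ← rpow_add two_pos, mul_comm, hσ]
  congr 2
  push_cast
  ring

/- The Fourier support of a block meets only those of its neighbours, so the smoothing estimate can
be applied to the sum of the neighbouring blocks of `g`. -/
theorem IsLowPiece.exists_besovSeq_succ_heatKernel_le (hΨ : IsLowPiece ψ₀ Ψ) (hψ : IsLPF n ψ₀)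
    {p₀ p₁ : ℝ≥0∞} (hp₀ : 1 ≤ p₀) (hp₀₁ : p₀ ≤ p₁) (hp₁ : p₁ ≠ ∞) {s₀ s₁ σ : ℝ} (hs₀ : 0 ≤ s₀)
    (hσ : σ = s₁ - s₀ + n * (1 / p₀.toReal - 1 / p₁.toReal)) (hσ₀ : 0 ≤ σ) (hσ₂ : σ ≤ 2) :
    ∃ C : ℝ≥0, ∀ τ : ℝ, 0 < τ → ∀ (g : 𝓢(Rn n, ℂ)) (j : ℕ),
      besovSeq ψ₀ Ψ s₁ p₁ (heatKernel (Rn n) τ ⋆ₛ g) (j + 1) ≤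
        C * ENNReal.ofReal (τ ^ (-(σ / 2))) * (besovSeq ψ₀ Ψ s₀ p₀ g j +
          besovSeq ψ₀ Ψ s₀ p₀ g (j + 1) + besovSeq ψ₀ Ψ s₀ p₀ g (j + 2)) := by
  obtain ⟨C, smoothing⟩ := exists_eLpNorm_dilate_convolution_heatKernel_le hp₀ hp₀₁ hp₁
    (b := σ / 2) (by linarith) (by linarith) hψ.hasCompactSupport_fourier
    hψ.zero_notMem_tsupport_fourier
  refine ⟨C * Real.toNNReal (2 ^ s₀), fun τ hτ g j => ?_⟩
  set W := (lpBlock ψ₀ Ψ j + lpBlock ψ₀ Ψ (j + 1) + lpBlock ψ₀ Ψ (j + 2)) ⋆ₛ g with hW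
  have localize : lpBlock ψ₀ Ψ (j + 1) ⋆ₛ (heatKernel (Rn n) τ ⋆ₛ g) =
      dilate ((2 : ℝ) ^ j) (complexify ψ₀) ⋆ₛ (heatKernel (Rn n) τ ⋆ₛ W) := by
    conv_lhs => rw [← hΨ.lpBlock_convolution_neighbours hψ]
    refine eq_of_fourier_eq fun ξ => ?_
    simp only [hW, lpBlock, fourier_convolution_eq_mul]
    ring
  set d : ℝ := n * (1 / p₀.toReal - 1 / p₁.toReal) with hd
  have block_le := smoothing ((2 : ℝ) ^ j) (by positivity) τ hτ W
  rw [finrank_euclideanSpace_fin, ← hd] at block_le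
  calc besovSeq ψ₀ Ψ s₁ p₁ (heatKernel (Rn n) τ ⋆ₛ g) (j + 1)
      ≤ ENNReal.ofReal (2 ^ ((j : ℝ) * s₁)) * (C * ENNReal.ofReal (((2 : ℝ) ^ j) ^ d *
          (((2 : ℝ) ^ j) ^ 2 * τ) ^ (-(σ / 2))) * eLpNorm W p₀ volume) := by
        rw [besovSeq, localize, Nat.add_sub_cancel]
        exact mul_le_mul_right block_le _
    _ = C * ENNReal.ofReal (τ ^ (-(σ / 2))) *
          (ENNReal.ofReal (2 ^ ((j : ℝ) * s₀)) * eLpNorm W p₀ volume) := by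
        rw [mul_assoc (C : ℝ≥0∞), mul_left_comm, ← mul_assoc (ENNReal.ofReal _),
          ← ENNReal.ofReal_mul (by positivity), two_rpow_mul_rpow_mul_sq_mul_rpow hτ j hσ,
          ENNReal.ofReal_mul (by positivity), mul_assoc, mul_assoc]
    _ ≤ _ := by
        refine (mul_le_mul_right (ofReal_mul_eLpNorm_neighbours_le hp₀ hs₀ g j) _).trans_eq ?_
        simp only [ENNReal.coe_mul, ENNReal.ofReal]
        ring

theorem IsLowPiece.exists_besovNorm_heatOp_le (hΨ : IsLowPiece ψ₀ Ψ) (hψ : IsLPF n ψ₀)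
    {p₀ p₁ : ℝ≥0∞} (hp₀ : 1 ≤ p₀) (hp₀₁ : p₀ ≤ p₁) (hp₁ : p₁ ≠ ∞) (hq : 1 ≤ q) {s₀ s₁ σ : ℝ}
    (hs₀ : 0 < s₀) (hσ : σ = s₁ - s₀ + n * (1 / p₀.toReal - 1 / p₁.toReal)) (hσ₀ : 0 ≤ σ)
    (hσ₂ : σ ≤ 2) :
    ∃ C : ℝ≥0, ∀ τ : ℝ, 0 < τ → τ ≤ 1 → ∀ f : 𝓢(Rn n, ℝ),
      besovNorm ψ₀ Ψ s₁ p₁ q (heatOp n τ f) ≤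
        C * ENNReal.ofReal (τ ^ (-(σ / 2))) * besovNorm ψ₀ Ψ s₀ p₀ q f := by
  have hq₀ : q ≠ 0 := (one_pos.trans_le hq).ne'
  obtain ⟨C, low⟩ := hΨ.exists_besovSeq_zero_heatKernel_le hψ hp₀ hp₀₁ hp₁ hq₀ hs₀ s₁
  obtain ⟨D, high⟩ := hΨ.exists_besovSeq_succ_heatKernel_le hψ hp₀ hp₀₁ hp₁ hs₀.le hσ hσ₀ hσ₂
  refine ⟨C + 3 * D, fun τ hτ hτ₁ f => ?_⟩
  set g := complexify f
  set R := ENNReal.ofReal (τ ^ (-(σ / 2)))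
  have one_le_R : 1 ≤ R := ENNReal.one_le_ofReal.2
    (one_le_rpow_of_pos_of_le_one_of_nonpos hτ hτ₁ (by linarith))
  have norm_le : eLpNorm (besovSeq ψ₀ Ψ s₀ p₀ g) q Measure.count ≤ besovNorm ψ₀ Ψ s₀ p₀ q f :=
    eLpNorm_besovSeq_le_besovNorm hq fun x => (complexify_apply f x).symm
  have high_norm : eLpNorm (fun j => besovSeq ψ₀ Ψ s₁ p₁ (heatKernel (Rn n) τ ⋆ₛ g) (j + 1)) q
      Measure.count ≤ D * R * (3 * eLpNorm (besovSeq ψ₀ Ψ s₀ p₀ g) q Measure.count) := by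
    refine (eLpNorm_mono_enorm (g := fun j => D * R * (besovSeq ψ₀ Ψ s₀ p₀ g j +
      besovSeq ψ₀ Ψ s₀ p₀ g (j + 1) + besovSeq ψ₀ Ψ s₀ p₀ g (j + 2)))
      fun j => high τ hτ g j).trans ?_
    rw [eLpNorm_count_const_mul _ hq₀]
    gcongr
    exact eLpNorm_count_window_le hq _
  rw [besovNorm_eq_besovSeq hq₀ (ofReal_heatOp_eq hτ fun x => (complexify_apply f x).symm)]
  calc _ ≤ C * eLpNorm (besovSeq ψ₀ Ψ s₀ p₀ g) q Measure.count +
          D * R * (3 * eLpNorm (besovSeq ψ₀ Ψ s₀ p₀ g) q Measure.count) :=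
        add_le_add (low τ hτ g) high_norm
    _ ≤ C * R * besovNorm ψ₀ Ψ s₀ p₀ q f + D * R * (3 * besovNorm ψ₀ Ψ s₀ p₀ q f) := by
        gcongr
        exact le_mul_of_one_le_right' one_le_R
    _ = _ := by
        push_cast
        ring

end HeatSmoothing

section BesovMinkowski

variable {ψ₀ Ψ : 𝓢(Rn n, ℝ)} {p p₀ q : ℝ≥0∞} {s : ℝ}

theorem continuous_lpKernel (ψ₀ : 𝓢(Rn n, ℝ)) (j : ℤ) : Continuous (lpKernel ψ₀ j) :=
  continuous_const.mul (ψ₀.continuous.comp (continuous_const_smul _))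

theorem integrable_lpKernel (ψ₀ : 𝓢(Rn n, ℝ)) (j : ℤ) : Integrable (lpKernel ψ₀ j) :=
  (ψ₀.integrable.comp_smul (by positivity)).const_mul _

theorem besovNorm_integral_le {α : Type*} [MeasurableSpace α] {ν : Measure α} [SigmaFinite ν]
    {H : α → Rn n → ℝ} (hH : StronglyMeasurable (Function.uncurry H)) (hp₀ : 1 ≤ p₀)
    (hp₀_top : p₀ ≠ ∞) (hH_fin : ∫⁻ a, eLpNorm (H a) p₀ volume ∂ν ≠ ∞) (hp : 1 ≤ p)
    (hp_top : p ≠ ∞) (hq : 1 ≤ q) :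
    besovNorm ψ₀ Ψ s p q (fun x => ∫ a, H a x ∂ν) ≤ ∫⁻ a, besovNorm ψ₀ Ψ s p q (H a) ∂ν := by
  have measurable_norm {P : Rn n → ℝ} (hP : Continuous P) : Measurable fun a =>
      eLpNorm (convolution P (H a) (ContinuousLinearMap.mul ℝ ℝ) volume) p volume :=
    measurable_eLpNorm_right (one_pos.trans_le hp).ne' hp_top
      ((stronglyMeasurable_uncurry_convolution (μ := volume) (P := fun _ => P)
        (hP.stronglyMeasurable.comp_measurable measurable_snd) hH).enorm.comp measurable_swap)
  have norm_le {P : Rn n → ℝ} (hP : Continuous P) (hP_int : Integrable P) :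
      eLpNorm (convolution P (fun x => ∫ a, H a x ∂ν) (ContinuousLinearMap.mul ℝ ℝ) volume) p
        volume ≤
      ∫⁻ a, eLpNorm (convolution P (H a) (ContinuousLinearMap.mul ℝ ℝ) volume) p volume ∂ν :=
    eLpNorm_convolution_integral_le hp₀ hp₀_top hP.stronglyMeasurable hP_int hH hH_fin hp hp_top
  have weighted_le (j : ℕ) :
      ENNReal.ofReal (2 ^ ((j : ℝ) * s)) * eLpNorm (lpProj ψ₀ j fun x => ∫ a, H a x ∂ν) p volume ≤
      ∫⁻ a, ENNReal.ofReal (2 ^ ((j : ℝ) * s)) * eLpNorm (lpProj ψ₀ j (H a)) p volume ∂ν := by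
    rw [lintegral_const_mul' _ _ ENNReal.ofReal_ne_top]
    exact mul_le_mul_right (norm_le (continuous_lpKernel ψ₀ j) (integrable_lpKernel ψ₀ j)) _
  simp only [besovNorm_eq_add_eLpNorm_count (one_pos.trans_le hq).ne']
  rw [lintegral_add_left (measurable_norm Ψ.continuous)]
  exact add_le_add (norm_le Ψ.continuous Ψ.integrable) ((eLpNorm_mono_enorm weighted_le).trans
    (eLpNorm_count_lintegral_le hq fun j =>
      (measurable_norm (continuous_lpKernel ψ₀ j)).const_mul _))

end BesovMinkowski

section Duhamel

variable {ψ₀ Ψ : 𝓢(Rn n, ℝ)} {p₀ p₁ q : ℝ≥0∞} {s₀ s₁ : ℝ}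

theorem stronglyMeasurable_uncurry_heatOp_sub (t : ℝ) {v : ℝ → Rn n → ℝ}
    (hv : StronglyMeasurable (Function.uncurry v)) :
    StronglyMeasurable (Function.uncurry fun s => heatOp n (t - s) (v s)) := by
  refine stronglyMeasurable_uncurry_convolution (Measurable.stronglyMeasurable ?_) hv
  simp only [Function.uncurry_def]
  fun_prop

theorem stronglyMeasurable_uncurry_indicator {E : Type*} [TopologicalSpace E]
    [TopologicalSpace.MetrizableSpace E] [SecondCountableTopology E] [MeasurableSpace E]
    [OpensMeasurableSpace E] {I : Set ℝ} (hI : MeasurableSet I) {u : ℝ → E → ℝ}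
    (hu : ∀ t ∈ I, Continuous (u t)) (hu' : ∀ x, ContinuousOn (fun t => u t x) I) :
    StronglyMeasurable (Function.uncurry (I.indicator u)) := by
  suffices h : StronglyMeasurable (Function.uncurry fun x t => I.indicator u t x) from
    h.comp_measurable measurable_swap
  refine stronglyMeasurable_uncurry_of_continuous_of_stronglyMeasurable (fun t => ?_) fun x => ?_
  · by_cases ht : t ∈ I
    · simpa only [Set.indicator_of_mem ht] using hu t ht
    · simpa only [Set.indicator_of_notMem ht] using continuous_zero
  · classical
    have slice_eq : (fun t => I.indicator u t x) = I.piecewise (fun t => u t x) 0 := by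
      ext t
      simp [Set.piecewise, Set.indicator_apply, apply_ite (fun f : E → ℝ => f x)]
    rw [slice_eq]
    exact ((hu' x).measurable_piecewise continuousOn_const hI).stronglyMeasurable

theorem ofReal_rpow_mul_le_iff {t k : ℝ} (ht : 0 < t) {a b : ℝ≥0∞} :
    ENNReal.ofReal (t ^ k) * a ≤ b ↔ a ≤ ENNReal.ofReal (t ^ (-k)) * b := by
  rw [ENNReal.mul_le_iff_le_inv (by positivity) ENNReal.ofReal_ne_top,
    ← ENNReal.ofReal_inv_of_pos (by positivity), rpow_neg ht.le]

theorem setLIntegral_Ioo_le_of_le_rpow_sub_mul_rpow {a k t : ℝ} (ha : a < 1) (hk : k < 1)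
    (ht : 0 < t) (F : ℝ → ℝ≥0∞) {A N : ℝ≥0∞} (hF : ∀ s ∈ Set.Ioo 0 t,
      F s ≤ A * ENNReal.ofReal ((t - s) ^ (-a)) * (ENNReal.ofReal (s ^ (-k)) * N)) :
    ∫⁻ s in Set.Ioo 0 t, F s ≤
      ENNReal.ofReal (t ^ (1 - a - k)) *
        (A * ENNReal.ofReal (ProbabilityTheory.beta (1 - k) (1 - a)) * N) := by
  calc ∫⁻ s in Set.Ioo 0 t, F s
      ≤ ∫⁻ s in Set.Ioo 0 t, A * N * ENNReal.ofReal ((t - s) ^ (-a) * s ^ (-k)) :=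
        setLIntegral_mono' measurableSet_Ioo fun s hs => (hF s hs).trans_eq <| by
          rw [ENNReal.ofReal_mul (rpow_nonneg (sub_nonneg.2 hs.2.le) _)]
          ring
    _ = A * N * ENNReal.ofReal (ProbabilityTheory.beta (1 - k) (1 - a) * t ^ (1 - a - k)) := by
        rw [lintegral_const_mul _ (by fun_prop), setLIntegral_Ioo_rpow_sub_mul_rpow ha hk ht]
    _ = _ := by
        rw [ENNReal.ofReal_mul' (by positivity)]
        ring

theorem IsLowPiece.exists_besovNorm_integral_heatOp_le (hΨ : IsLowPiece ψ₀ Ψ) (hψ : IsLPF n ψ₀)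
    (hp₀ : 1 ≤ p₀) (hp₀₁ : p₀ ≤ p₁) (hp₁ : p₁ ≠ ∞) (hq : 1 ≤ q) (hs₀ : 0 < s₀) {σ k : ℝ}
    (hσ : σ = s₁ - s₀ + n * (1 / p₀.toReal - 1 / p₁.toReal)) (hσ₀ : 0 ≤ σ) (hσ₂ : σ < 2)
    (hk : k < 1) :
    ∃ C : ℝ≥0, ∀ t : ℝ, 0 < t → t ≤ 1 → ∀ v : ℝ → Rn n → ℝ,
      StronglyMeasurable (Function.uncurry v) →
      (∀ s ∈ Set.Ioo 0 t, ∃ f : 𝓢(Rn n, ℝ), ⇑f = v s) → ∀ N : ℝ≥0∞, N ≠ ∞ →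
      (∀ s ∈ Set.Ioo 0 t, ENNReal.ofReal (s ^ k) * besovNorm ψ₀ Ψ s₀ p₀ q (v s) ≤ N) →
      ENNReal.ofReal (t ^ (k + σ / 2 - 1)) *
        besovNorm ψ₀ Ψ s₁ p₁ q (fun x => ∫ s in Set.Ioo 0 t, heatOp n (t - s) (v s) x) ≤ C * N := by
  have hp₀_top : p₀ ≠ ∞ := ne_top_of_le_ne_top hp₁ hp₀₁
  obtain ⟨C, smoothing⟩ := hΨ.exists_besovNorm_heatOp_le hψ hp₀ hp₀₁ hp₁ hq hs₀ hσ hσ₀ hσ₂.le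
  obtain ⟨D, contraction⟩ := hΨ.exists_eLpNorm_heatOp_le hψ hp₀ hp₀_top hq hs₀
  refine ⟨C * (ProbabilityTheory.beta (1 - k) (1 - σ / 2)).toNNReal,
    fun t ht ht₁ v hv hv_schwartz N hN hv_le => ?_⟩
  have norm_le {s : ℝ} (hs : s ∈ Set.Ioo 0 t) :
      besovNorm ψ₀ Ψ s₀ p₀ q (v s) ≤ ENNReal.ofReal (s ^ (-k)) * N :=
    (ofReal_rpow_mul_le_iff hs.1).1 (hv_le s hs)
  have lp_integral_ne_top :
      ∫⁻ s in Set.Ioo 0 t, eLpNorm (heatOp n (t - s) (v s)) p₀ volume ≠ ∞ := by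
    refine ne_top_of_le_ne_top ?_ (setLIntegral_Ioo_le_of_le_rpow_sub_mul_rpow (a := 0) zero_lt_one
      hk ht (fun s => eLpNorm (heatOp n (t - s) (v s)) p₀ volume) (A := D) (N := N)
      fun s hs => ?_)
    · finiteness
    · obtain ⟨f, hf⟩ := hv_schwartz s hs
      have heat_le := contraction (t - s) (sub_pos.2 hs.2) f
      rw [hf] at heat_le
      simpa using heat_le.trans (mul_le_mul_right (norm_le hs) _)
  have besov_integral_le := setLIntegral_Ioo_le_of_le_rpow_sub_mul_rpow (a := σ / 2) (by linarith)
    hk ht (fun s => besovNorm ψ₀ Ψ s₁ p₁ q (heatOp n (t - s) (v s))) (A := C) (N := N)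
    fun s hs => by
      obtain ⟨f, hf⟩ := hv_schwartz s hs
      have heat_le := smoothing (t - s) (sub_pos.2 hs.2) (by linarith [hs.1]) f
      rw [hf] at heat_le
      exact heat_le.trans (mul_le_mul_right (norm_le hs) _)
  rw [ofReal_rpow_mul_le_iff ht, show -(k + σ / 2 - 1) = 1 - σ / 2 - k by ring, ENNReal.coe_mul]
  exact (besovNorm_integral_le (stronglyMeasurable_uncurry_heatOp_sub t hv) hp₀ hp₀_top
    lp_integral_ne_top (hp₀.trans hp₀₁) hp₁ hq).trans besov_integral_le

end Duhamel

theorem besov_duhamel_weighted_estimate_general (n : ℕ) (ψ₀ Ψ : SchwartzMap (Rn n) ℝ)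
    (hψ : IsLPF n ψ₀) (hΨ : IsLowPiece ψ₀ Ψ) (p₀ p₁ : ℝ≥0∞) (hp₀ : 1 ≤ p₀) (hp₀₁ : p₀ ≤ p₁)
    (hp₁ : p₁ < ∞) (s₀ s₁ : ℝ) (hs₀ : 0 < s₀) (q : ℝ≥0∞) (hq : 1 ≤ q) (σ k₀ k₁ : ℝ)
    (hσdef : σ = s₁ - s₀ + (n : ℝ) * (1 / p₀.toReal - 1 / p₁.toReal)) (hσ₀ : 0 ≤ σ) (hσ₂ : σ < 2)
    (hk₀ : k₀ < 1) (hk₁ : k₁ = k₀ + σ / 2 - 1) :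
    ∃ C : ℝ, 0 < C ∧ ∀ T : ℝ, T ≤ 1 → ∀ u : ℝ → Rn n → ℝ,
      (∀ t ∈ Set.Ioo (0 : ℝ) T, ∃ U : SchwartzMap (Rn n) ℝ, ∀ x, U x = u t x) →
      (∀ x : Rn n, ContinuousOn (fun t => u t x) (Set.Ioo (0 : ℝ) T)) →
      (⨆ t ∈ Set.Ioo (0 : ℝ) T,
        ENNReal.ofReal (t ^ k₀) * besovNorm ψ₀ Ψ s₀ p₀ q (u t)) < ∞ →
      ∀ t ∈ Set.Ioo (0 : ℝ) T,
        ENNReal.ofReal (t ^ k₁) *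
            besovNorm ψ₀ Ψ s₁ p₁ q (fun x => ∫ s in (0 : ℝ)..t, heatOp n (t - s) (u s) x)
          ≤ ENNReal.ofReal C *
            ⨆ s ∈ Set.Ioo (0 : ℝ) T,
              ENNReal.ofReal (s ^ k₀) * besovNorm ψ₀ Ψ s₀ p₀ q (u s) := by
  obtain ⟨C, bound⟩ :=
    hΨ.exists_besovNorm_integral_heatOp_le hψ hp₀ hp₀₁ hp₁.ne hq hs₀ hσdef hσ₀ hσ₂ hk₀
  refine ⟨C + 1, by positivity, fun T hT u hu_schwartz hu_cont hN t ht => ?_⟩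
  set v := (Set.Ioo 0 T).indicator u
  have v_eq {s : ℝ} (hs : s ∈ Set.Ioo 0 t) : v s = u s :=
    Set.indicator_of_mem (s := Set.Ioo 0 T) ⟨hs.1, hs.2.trans ht.2⟩ u
  have hv : StronglyMeasurable (Function.uncurry v) :=
    stronglyMeasurable_uncurry_indicator measurableSet_Ioo
      (fun s hs => (hu_schwartz s hs).elim fun f hf => funext hf ▸ f.continuous) hu_cont
  have integral_eq (x : Rn n) : ∫ s in (0 : ℝ)..t, heatOp n (t - s) (u s) x =
      ∫ s in Set.Ioo 0 t, heatOp n (t - s) (v s) x := by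
    rw [intervalIntegral.integral_of_le ht.1.le, integral_Ioc_eq_integral_Ioo]
    exact setIntegral_congr_fun measurableSet_Ioo fun s hs => by simp only [v_eq hs]
  simp only [integral_eq, hk₁]
  refine (bound t ht.1 (ht.2.le.trans hT) v hv (fun s hs => ?_) _ hN.ne fun s hs => ?_).trans ?_
  · obtain ⟨f, hf⟩ := hu_schwartz s ⟨hs.1, hs.2.trans ht.2⟩
    exact ⟨f, (funext hf).trans (v_eq hs).symm⟩
  · rw [v_eq hs]
    exact le_iSup₂_of_le s ⟨hs.1, hs.2.trans ht.2⟩ le_rfl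
  · gcongr
    rw [ENNReal.ofReal_add C.coe_nonneg zero_le_one, ENNReal.ofReal_coe_nnreal]
    exact le_self_add

/-- Duhamel operator estimate in weighted-in-time Besov spaces: with
`σ = s₁ − s₀ + n(1/p₀ − 1/p₁) ∈ (0,2)`, `0 ≤ k₀ < 1`, `k₁ = k₀ + σ/2 − 1`, if
`N = sup_{0<t<T} t^{k₀}‖u(t)‖_{B^{s₀}_{p₀,q}} < ∞` then
`t^{k₁} ‖∫₀ᵗ e^{(t−s)Δ}u(s) ds‖_{B^{s₁}_{p₁,q}} ≤ C N` for every `t ∈ (0,T)`. -/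

theorem besov_duhamel_weighted_estimate
    (n : ℕ) (hn : 1 ≤ n) (ψ₀ Ψ : SchwartzMap (Rn n) ℝ)
    (hψ : IsLPF n ψ₀) (hΨ : IsLowPiece ψ₀ Ψ)
    (p₀ p₁ : ℝ≥0∞) (hp₀ : 1 ≤ p₀) (hp₀₁ : p₀ ≤ p₁) (hp₁ : p₁ < ∞)
    (s₀ s₁ : ℝ) (hs₀ : 0 < s₀) (hs₀₁ : s₀ ≤ s₁)
    (q : ℝ≥0∞) (hq : 1 ≤ q) (hq' : q < ∞)
    (σ k₀ k₁ : ℝ) (hσdef : σ = s₁ - s₀ + (n:ℝ) * (1/p₀.toReal - 1/p₁.toReal))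
    (hσ0 : 0 < σ) (hσ2 : σ < 2) (hk₀0 : 0 ≤ k₀) (hk₀1 : k₀ < 1)
    (hk₁ : k₁ = k₀ + σ/2 - 1) :
    ∃ C : ℝ, 0 < C ∧ ∀ T : ℝ, 0 < T → T ≤ 1 → ∀ u : ℝ → Rn n → ℝ,
      (∀ t ∈ Set.Ioo (0:ℝ) T, ∃ U : SchwartzMap (Rn n) ℝ, ∀ x, U x = u t x) →
      (∀ x : Rn n, ContinuousOn (fun t => u t x) (Set.Ioo (0:ℝ) T)) →
      (⨆ t ∈ Set.Ioo (0:ℝ) T,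
        ENNReal.ofReal (t ^ k₀) * besovNorm ψ₀ Ψ s₀ p₀ q (u t)) < ∞ →
      ∀ t ∈ Set.Ioo (0:ℝ) T,
        ENNReal.ofReal (t ^ k₁) *
            besovNorm ψ₀ Ψ s₁ p₁ q (fun x => ∫ s in (0:ℝ)..t, heatOp n (t - s) (u s) x)
          ≤ ENNReal.ofReal C *
            ⨆ s ∈ Set.Ioo (0:ℝ) T,
              ENNReal.ofReal (s ^ k₀) * besovNorm ψ₀ Ψ s₀ p₀ q (u s) := by
  obtain ⟨C, hC, bound⟩ := besov_duhamel_weighted_estimate_general n ψ₀ Ψ hψ hΨ p₀ p₁ hp₀ hp₀₁ hp₁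
    s₀ s₁ hs₀ q hq σ k₀ k₁ hσdef hσ0.le hσ2 hk₀1 hk₁
  exact ⟨C, hC, fun T _ => bound T⟩
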